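/- arXiv:2406.06916 — 11 statements merged into one kernel-verified Lean document; each statement's English description precedes it below -/
import Mathlib

section
/- (Velocity Lemma.) For every ξ = (ξ₁,ξ₂,ξ₃) ∈ ℝ³, every x ≥ 0 and every s ≥ 0 such that x − s(ξ₁+u) ≥ 0, one has e^{−cν₀ s/2} · α̃(x − s(ξ₁+u), ξ) ≤ α̃(x,ξ) ≤ e^{cν₀ s/2} · α̃(x − s(ξ₁+u), ξ). -/
noncomputable section

/-- The kinetic weight `α̃(x,ξ) = √((ξ₁+u)² + (cν₀)² x²)`. -/
def alphaTilde (u c ν₀ : ℝ) (x : ℝ) (ξ : EuclideanSpace ℝ (Fin 3)) : ℝ :=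
  Real.sqrt ((ξ 0 + u) ^ 2 + (c * ν₀) ^ 2 * x ^ 2)

theorem vel_key (t v a : ℝ) (ht : 0 ≤ t) :
    v ^ 2 + (a - t * v) ^ 2 ≤ Real.exp t * (v ^ 2 + a ^ 2) := by
  rcases ht.eq_or_lt with rfl | ht
  · simp
  have hsinh : t / 2 ≤ Real.sinh (t / 2) := Real.self_le_sinh_iff.2 (by linarith)
  rw [Real.sinh_eq] at hsinh
  have h1 : Real.exp (t / 2) ^ 2 = Real.exp t := by
    rw [← Real.exp_nat_mul]; congr 1; push_cast; ring
  have h2 : Real.exp (t / 2) * Real.exp (-(t / 2)) = 1 := by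
    rw [← Real.exp_add]; simp
  have hq : t + 1 ≤ Real.exp t := Real.add_one_le_exp t
  generalize Real.exp (t / 2) = m at *
  generalize Real.exp (-(t / 2)) = n at *
  generalize Real.exp t = l at *
  have h3 : t ^ 2 ≤ (m - n) ^ 2 := pow_le_pow_left₀ ht.le (by linarith) 2
  have h4 : t ^ 2 * l ≤ (l - 1) ^ 2 := by
    have : (l - 1) ^ 2 = (m - n) ^ 2 * l := by
      have : l - 1 = m * (m - n) := by rw [← h1, ← h2]; ring
      rw [this, ← h1]; ring
    rw [this]; exact mul_le_mul_of_nonneg_right h3 (by linarith)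
  have hq0 : 0 < l - 1 := by linarith
  have h5 : 0 ≤ (l - 1) * (l * (v ^ 2 + a ^ 2) - (v ^ 2 + (a - t * v) ^ 2)) := by
    have e : (l - 1) * (l * (v ^ 2 + a ^ 2) - (v ^ 2 + (a - t * v) ^ 2))
      = ((l - 1) ^ 2 - t ^ 2 * l) * v ^ 2 + (t * v + (l - 1) * a) ^ 2 := by ring
    rw [e]
    have := mul_nonneg (sub_nonneg.2 h4) (sq_nonneg v)
    positivity
  have := nonneg_of_mul_nonneg_right h5 hq0
  linarith

theorem vel_sqrt (t A B : ℝ) (h : A ≤ Real.exp t * B) :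
    Real.sqrt A ≤ Real.exp (t / 2) * Real.sqrt B := by
  have h1 : Real.exp t = Real.exp (t / 2) ^ 2 := by
    rw [← Real.exp_nat_mul]; congr 1; push_cast; ring
  calc Real.sqrt A ≤ Real.sqrt (Real.exp t * B) := Real.sqrt_le_sqrt h
    _ = _ := by
      rw [h1, Real.sqrt_mul (by positivity), Real.sqrt_sq (Real.exp_pos _).le]

/-- Velocity Lemma: along the characteristic, whenever `x ≥ 0`
and `x − s(ξ₁+u) ≥ 0`,
`e^{−cν₀s/2}·α̃(x−s(ξ₁+u),ξ) ≤ α̃(x,ξ) ≤ e^{cν₀s/2}·α̃(x−s(ξ₁+u),ξ)`. -/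
theorem velocity_lemma (u ν₀ c : ℝ) (hν₀ : 0 < ν₀) (hc : 0 < c)
    (ξ : EuclideanSpace ℝ (Fin 3)) (x s : ℝ)
    (hx : 0 ≤ x) (hs : 0 ≤ s) (hxs : 0 ≤ x - s * (ξ 0 + u)) :
    Real.exp (-(c * ν₀ * s) / 2) * alphaTilde u c ν₀ (x - s * (ξ 0 + u)) ξ ≤
        alphaTilde u c ν₀ x ξ ∧
      alphaTilde u c ν₀ x ξ ≤
        Real.exp (c * ν₀ * s / 2) * alphaTilde u c ν₀ (x - s * (ξ 0 + u)) ξ := by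
  have ht : 0 ≤ c * ν₀ * s := by positivity
  unfold alphaTilde
  generalize ξ 0 + u = v at *
  constructor
  · have h := vel_sqrt (c * ν₀ * s) (v ^ 2 + (c * ν₀) ^ 2 * (x - s * v) ^ 2)
      (v ^ 2 + (c * ν₀) ^ 2 * x ^ 2) (by
        have := vel_key (c * ν₀ * s) v (c * ν₀ * x) ht
        convert this using 2 <;> ring)
    rw [neg_div, Real.exp_neg, inv_mul_le_iff₀ (Real.exp_pos _)]
    exact h
  · apply vel_sqrt
    have := vel_key (c * ν₀ * s) (-v) (c * ν₀ * (x - s * v)) ht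
    convert this using 2 <;> ring
end
end

section
/- For every x ∈ ℝ and ξ = (ξ₁,ξ₂,ξ₃) ∈ ℝ³ with α̃(x,ξ) > 0, the cut-off kinetic weight α(x,ξ) := χ(α̃(x,ξ)) is differentiable in x and satisfies |(ξ₁+u)·∂ₓα(x,ξ)| ≤ 2cν₀·α(x,ξ). -/
noncomputable section

/-- wherever `α̃(x,ξ) > 0`, the cut-off kinetic weight
`α(x,ξ) = χ(α̃(x,ξ))` is differentiable in `x` and satisfies
`|(ξ₁+u)·∂ₓα(x,ξ)| ≤ 2cν₀·α(x,ξ)`. -/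
theorem alpha_deriv_bound (u ν₀ c : ℝ) (hν₀ : 0 < ν₀) (hc : 0 < c)
    (χ χ' : ℝ → ℝ)
    (hderiv : ∀ s ≥ (0:ℝ), HasDerivAt χ (χ' s) s)
    (hcont : ContinuousOn χ' (Set.Ici (0:ℝ)))
    (hmono : ∀ s ≥ (0:ℝ), 0 ≤ χ' s)
    (hid : ∀ s : ℝ, 0 ≤ s → s ≤ 1/2 → χ s = s)
    (hone : ∀ s : ℝ, 2 ≤ s → χ s = 1)
    (hbound : ∀ s ≥ (0:ℝ), |χ' s| ≤ 1)
    (x : ℝ) (ξ : EuclideanSpace ℝ (Fin 3)) (hpos : 0 < alphaTilde u c ν₀ x ξ) :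
    ∃ d : ℝ, HasDerivAt (fun y => χ (alphaTilde u c ν₀ y ξ)) d x ∧
      |(ξ 0 + u) * d| ≤ 2 * c * ν₀ * χ (alphaTilde u c ν₀ x ξ) := by
  have hk : 0 < c * ν₀ := mul_pos hc hν₀
  set s := alphaTilde u c ν₀ x ξ with hs
  have hmon : MonotoneOn χ (Set.Ici (0:ℝ)) := by
    apply monotoneOn_of_deriv_nonneg (convex_Ici 0)
    · intro y hy
      exact (hderiv y hy).continuousAt.continuousWithinAt
    · intro y hy
      exact (hderiv y (interior_subset hy)).differentiableAt.differentiableWithinAt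
    · intro y hy
      rw [(hderiv y (interior_subset hy)).deriv]
      exact hmono y (interior_subset hy)
  have hle : χ' s ≤ 1 := le_trans (le_abs_self _) (hbound s hpos.le)
  have hnn : 0 ≤ χ' s := hmono s hpos.le
  have key : χ' s * s ≤ 4 * χ s := by
    rcases le_or_gt s (1/2) with h1 | h1
    · rw [hid s hpos.le h1]
      nlinarith
    · have h2 : χ (1/2) ≤ χ s := hmon (by norm_num) hpos.le h1.le
      rw [hid (1/2) (by norm_num) le_rfl] at h2
      rcases le_or_gt s 2 with h3 | h3
      · nlinarith
      · have h4 : HasDerivAt χ 0 s := by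
          apply (hasDerivAt_const s (1:ℝ)).congr_of_eventuallyEq
          filter_upwards [lt_mem_nhds h3] with y hy
          exact hone y hy.le
        rw [(hderiv s hpos.le).unique h4]
        linarith
  have hq : 0 < (ξ 0 + u) ^ 2 + (c * ν₀) ^ 2 * x ^ 2 := Real.sqrt_pos.mp hpos
  have hsq : s ^ 2 = (ξ 0 + u) ^ 2 + (c * ν₀) ^ 2 * x ^ 2 := Real.sq_sqrt hq.le
  have hd : HasDerivAt (fun y => alphaTilde u c ν₀ y ξ) ((c * ν₀) ^ 2 * (2 * x) / (2 * s)) x := by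
    have h := (((hasDerivAt_pow 2 x).const_mul ((c * ν₀) ^ 2)).const_add
      ((ξ 0 + u) ^ 2)).sqrt hq.ne'
    simpa [alphaTilde, hs] using h
  refine ⟨_, (hderiv s hpos.le).comp x hd, ?_⟩
  have e : (ξ 0 + u) * (χ' s * ((c * ν₀) ^ 2 * (2 * x) / (2 * s)))
      = (c * ν₀) * χ' s * (((ξ 0 + u) * (c * ν₀ * x)) / s) := by
    field_simp
  have hab : |((ξ 0 + u) * (c * ν₀ * x)) / s| ≤ s / 2 := by
    rw [abs_div, abs_of_pos hpos, div_le_iff₀ hpos, abs_le]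
    constructor
    · nlinarith [sq_nonneg ((ξ 0 + u) + (c * ν₀ * x))]
    · nlinarith [sq_nonneg ((ξ 0 + u) - (c * ν₀ * x))]
  rw [e, abs_mul, abs_of_nonneg (mul_nonneg hk.le hnn)]
  calc c * ν₀ * χ' s * |((ξ 0 + u) * (c * ν₀ * x)) / s|
      ≤ c * ν₀ * χ' s * (s / 2) := mul_le_mul_of_nonneg_left hab (mul_nonneg hk.le hnn)
    _ = c * ν₀ * (χ' s * s) / 2 := by ring
    _ ≤ c * ν₀ * (4 * χ s) / 2 := by gcongr
    _ = 2 * c * ν₀ * χ s := by ring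
end
end

section
/- (Velocity Lemma for the cut-off weight.) For every ξ = (ξ₁,ξ₂,ξ₃) ∈ ℝ³, every x ≥ 0 and every s ≥ 0 such that x − s(ξ₁+u) ≥ 0, one has e^{−2cν₀ s} · α(x − s(ξ₁+u), ξ) ≤ α(x,ξ) ≤ e^{2cν₀ s} · α(x − s(ξ₁+u), ξ). -/
noncomputable section

/-- One step comparison of the weight along the transport. -/
lemma quad_bound (t X v : ℝ) (ht : 0 ≤ t) :
    v ^ 2 + (X + t * v) ^ 2 ≤ Real.exp t * (v ^ 2 + X ^ 2) := by
  have hsinh : t / 2 ≤ Real.sinh (t / 2) := Real.self_le_sinh_iff.2 (by linarith)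
  rw [Real.sinh_eq] at hsinh
  have he : Real.exp t = Real.exp (t / 2) ^ 2 := by
    rw [← Real.exp_nat_mul]; congr 1; push_cast; ring
  have hp : 0 < Real.exp (t / 2) := Real.exp_pos _
  have hi : Real.exp (-(t / 2)) * Real.exp (t / 2) = 1 := by
    rw [← Real.exp_add]; simp
  have h1 : t * Real.exp (t / 2) ≤ Real.exp t - 1 := by
    rw [he]; nlinarith
  have h2 : Real.exp t * t ^ 2 ≤ (Real.exp t - 1) ^ 2 := by
    rw [he] at h1 ⊢
    have := pow_le_pow_left₀ (mul_nonneg ht hp.le) h1 2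
    nlinarith
  rcases ht.eq_or_lt with h0 | h0
  · subst h0; simp
  have hE : 0 < Real.exp t - 1 := lt_of_lt_of_le (mul_pos h0 hp) h1
  have key : 0 ≤ (Real.exp t - 1) *
      (Real.exp t * (v ^ 2 + X ^ 2) - (v ^ 2 + (X + t * v) ^ 2)) := by
    nlinarith [sq_nonneg ((Real.exp t - 1) * X - t * v),
      mul_nonneg (sub_nonneg.2 h2) (sq_nonneg v)]
  linarith [nonneg_of_mul_nonneg_right key hE]

lemma chi_compare (χ χ' : ℝ → ℝ)
    (hderiv : ∀ s ≥ (0:ℝ), HasDerivAt χ (χ' s) s)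
    (hmono : ∀ s ≥ (0:ℝ), 0 ≤ χ' s)
    (hid : ∀ s : ℝ, 0 ≤ s → s ≤ 1/2 → χ s = s)
    (hone : ∀ s : ℝ, 2 ≤ s → χ s = 1)
    (hbound : ∀ s ≥ (0:ℝ), |χ' s| ≤ 1) (a b E : ℝ) (ha : 0 ≤ a) (hb : 0 ≤ b)
    (hE : 1 ≤ E) (hab : b ^ 2 ≤ E * a ^ 2) : χ b ≤ E ^ 2 * χ a := by
  have hm : MonotoneOn χ (Set.Ici 0) := by
    apply monotoneOn_of_deriv_nonneg (convex_Ici 0)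
    · exact fun y hy => (hderiv y hy).continuousAt.continuousWithinAt
    · intro y hy
      rw [interior_Ici] at hy
      exact (hderiv y (le_of_lt hy)).differentiableAt.differentiableWithinAt
    · intro y hy
      rw [interior_Ici] at hy
      rw [(hderiv y (le_of_lt hy)).deriv]
      exact hmono y (le_of_lt hy)
  have h0 : χ 0 = 0 := hid 0 le_rfl (by norm_num)
  have hnn : ∀ y, 0 ≤ y → 0 ≤ χ y := fun y hy => by
    rw [← h0]; exact hm (Set.mem_Ici.2 le_rfl) hy hy
  have hE2 : 1 ≤ E ^ 2 := one_le_pow₀ hE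
  rcases le_or_gt b a with hba | hba
  · have := hm hb ha hba
    nlinarith [hnn a ha]
  rcases ha.eq_or_lt with h | hapos
  · subst h
    nlinarith
  have hkey : ∀ y, 0 < y → y * χ' y ≤ 4 * χ y := by
    intro y hy
    have hb1 := (abs_le.1 (hbound y hy.le)).2
    rcases le_or_gt y (1/2) with h | h
    · rw [hid y hy.le h]; nlinarith
    · have h12 : 1/2 ≤ χ y := by
        have := hm (Set.mem_Ici.2 (by norm_num : (0:ℝ) ≤ 1/2)) hy.le h.le
        rwa [hid (1/2) (by norm_num) le_rfl] at this
      rcases le_or_gt y 2 with h2 | h2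
      · nlinarith
      · have hz : HasDerivAt χ 0 y := by
          apply (hasDerivAt_const y (1:ℝ)).congr_of_eventuallyEq
          filter_upwards [lt_mem_nhds h2] with z hz
          exact hone z hz.le
        rw [(hderiv y hy.le).unique hz]; linarith
  have hF : ∀ y, 0 < y → HasDerivAt (fun z => χ z / z ^ 4)
      ((χ' y * y ^ 4 - χ y * (4 * y ^ 3)) / (y ^ 4) ^ 2) y := by
    intro y hy
    have := (hderiv y hy.le).div (hasDerivAt_pow 4 y) (by positivity)
    have he : (χ' y * y ^ 4 - χ y * (4 * y ^ 3)) / (y ^ 4) ^ 2 =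
        (χ' y * y ^ 4 - χ y * (((4 : ℕ) : ℝ) * y ^ (4 - 1))) / (y ^ 4) ^ 2 := by
      norm_num
    rw [he]
    exact this
  have hanti : AntitoneOn (fun z => χ z / z ^ 4) (Set.Ici a) := by
    apply antitoneOn_of_deriv_nonpos (convex_Ici a)
    · exact fun y hy => (hF y (hapos.trans_le hy)).continuousAt.continuousWithinAt
    · intro y hy
      rw [interior_Ici] at hy
      exact (hF y (hapos.trans hy)).differentiableAt.differentiableWithinAt
    · intro y hy
      rw [interior_Ici] at hy
      have hy0 : 0 < y := hapos.trans hy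
      rw [(hF y hy0).deriv]
      apply div_nonpos_of_nonpos_of_nonneg _ (by positivity)
      have := mul_le_mul_of_nonneg_left (hkey y hy0) (pow_pos hy0 3).le
      nlinarith
  have h1 := hanti (Set.mem_Ici.2 le_rfl) (Set.mem_Ici.2 hba.le) hba.le
  have hb0 : 0 < b := hapos.trans hba
  simp only at h1
  rw [div_le_div_iff₀ (by positivity) (by positivity)] at h1
  have h4 : b ^ 4 ≤ E ^ 2 * a ^ 4 := by
    have := pow_le_pow_left₀ (sq_nonneg b) hab 2
    nlinarith
  have h5 := mul_le_mul_of_nonneg_left h4 (hnn a ha)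
  have ha4 : 0 < a ^ 4 := by positivity
  refine le_of_mul_le_mul_right ?_ ha4
  linarith

/-- Velocity Lemma for the cut-off weight: with
`α(x,ξ) = χ(α̃(x,ξ))`, whenever `x ≥ 0` and `x − s(ξ₁+u) ≥ 0`,
`e^{−2cν₀s}·α(x−s(ξ₁+u),ξ) ≤ α(x,ξ) ≤ e^{2cν₀s}·α(x−s(ξ₁+u),ξ)`. -/
theorem velocity_lemma_cutoff (u ν₀ c : ℝ) (hν₀ : 0 < ν₀) (hc : 0 < c)
    (χ χ' : ℝ → ℝ)
    (hderiv : ∀ s ≥ (0:ℝ), HasDerivAt χ (χ' s) s)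
    (hcont : ContinuousOn χ' (Set.Ici (0:ℝ)))
    (hmono : ∀ s ≥ (0:ℝ), 0 ≤ χ' s)
    (hid : ∀ s : ℝ, 0 ≤ s → s ≤ 1/2 → χ s = s)
    (hone : ∀ s : ℝ, 2 ≤ s → χ s = 1)
    (hbound : ∀ s ≥ (0:ℝ), |χ' s| ≤ 1)
    (ξ : EuclideanSpace ℝ (Fin 3)) (x s : ℝ)
    (hx : 0 ≤ x) (hs : 0 ≤ s) (hxs : 0 ≤ x - s * (ξ 0 + u)) :
    Real.exp (-(2 * c * ν₀ * s)) * χ (alphaTilde u c ν₀ (x - s * (ξ 0 + u)) ξ) ≤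
        χ (alphaTilde u c ν₀ x ξ) ∧
      χ (alphaTilde u c ν₀ x ξ) ≤
        Real.exp (2 * c * ν₀ * s) * χ (alphaTilde u c ν₀ (x - s * (ξ 0 + u)) ξ) := by
  have hk : 0 ≤ c * ν₀ * s := by positivity
  have hE : 1 ≤ Real.exp (c * ν₀ * s) := Real.one_le_exp hk
  have hE2 : Real.exp (2 * c * ν₀ * s) = Real.exp (c * ν₀ * s) ^ 2 := by
    rw [← Real.exp_nat_mul]; congr 1; push_cast; ring
  have hsq : ∀ y, alphaTilde u c ν₀ y ξ ^ 2 = (ξ 0 + u) ^ 2 + (c * ν₀) ^ 2 * y ^ 2 :=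
    fun y => Real.sq_sqrt (by positivity)
  have hn : ∀ y, 0 ≤ alphaTilde u c ν₀ y ξ := fun y => Real.sqrt_nonneg _
  constructor
  · rw [Real.exp_neg, inv_mul_le_iff₀ (Real.exp_pos _), hE2]
    apply chi_compare χ χ' hderiv hmono hid hone hbound _ _ _ (hn _) (hn _) hE
    rw [hsq, hsq]
    have := quad_bound (c * ν₀ * s) (-(c * ν₀ * x)) (ξ 0 + u) hk
    convert this using 1 <;> ring
  · rw [hE2]
    apply chi_compare χ χ' hderiv hmono hid hone hbound _ _ _ (hn _) (hn _) hE
    rw [hsq, hsq]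
    have := quad_bound (c * ν₀ * s) (c * ν₀ * (x - s * (ξ 0 + u))) (ξ 0 + u) hk
    convert this using 1 <;> ring
end
end

section
/- There exist constants C > 0 and ϱ > 0 (depending only on C₁, C₂) such that for all ξ, ξ' ∈ ℝ³ with ξ ≠ ξ', k₁(ξ,ξ') + k₂(ξ,ξ') ≤ C · e^{−ϱ|ξ−ξ'|²} / |ξ−ξ'|. -/
noncomputable section

/-- The first Grad kernel `k₁(ξ,ξ') = C₁|ξ−ξ'| e^{−(|ξ|²+|ξ'|²)/4}`. -/
def gradK1 (C₁ : ℝ) (ξ ξ' : EuclideanSpace ℝ (Fin 3)) : ℝ :=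
  C₁ * ‖ξ - ξ'‖ * Real.exp (-(‖ξ‖ ^ 2 + ‖ξ'‖ ^ 2) / 4)

/-- The second Grad kernel
`k₂(ξ,ξ') = C₂|ξ−ξ'|⁻¹ e^{−|ξ−ξ'|²/8 − (|ξ|²−|ξ'|²)²/(8|ξ−ξ'|²)}`. -/
def gradK2 (C₂ : ℝ) (ξ ξ' : EuclideanSpace ℝ (Fin 3)) : ℝ :=
  C₂ * ‖ξ - ξ'‖⁻¹ *
    Real.exp (-‖ξ - ξ'‖ ^ 2 / 8 - (‖ξ‖ ^ 2 - ‖ξ'‖ ^ 2) ^ 2 / (8 * ‖ξ - ξ'‖ ^ 2))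

/-- the Grad kernel `k = k₁ + k₂` satisfies
`k(ξ,ξ') ≤ C e^{−ϱ|ξ−ξ'|²}/|ξ−ξ'|` for some `C, ϱ > 0`. -/
theorem grad_kernel_bound (C₁ C₂ : ℝ) (hC₁ : 0 < C₁) (hC₂ : 0 < C₂) :
    ∃ C > (0:ℝ), ∃ ϱ > (0:ℝ), ∀ ξ ξ' : EuclideanSpace ℝ (Fin 3), ξ ≠ ξ' →
      gradK1 C₁ ξ ξ' + gradK2 C₂ ξ ξ' ≤
        C * Real.exp (-ϱ * ‖ξ - ξ'‖ ^ 2) / ‖ξ - ξ'‖ := by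
  refine ⟨16 * C₁ + C₂, by positivity, 1 / 16, by norm_num, ?_⟩
  intro ξ ξ' hne
  have hd : 0 < ‖ξ - ξ'‖ := norm_pos_iff.mpr (sub_ne_zero.mpr hne)
  have htri : ‖ξ - ξ'‖ ≤ ‖ξ‖ + ‖ξ'‖ := norm_sub_le _ _
  unfold gradK1 gradK2
  generalize ‖ξ - ξ'‖ = d at *
  generalize ‖ξ‖ = a at *
  generalize ‖ξ'‖ = b at *
  have hsq : d ^ 2 ≤ 2 * (a ^ 2 + b ^ 2) := by
    nlinarith [sq_nonneg (a - b), mul_self_le_mul_self hd.le htri]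
  have h1 : Real.exp (-(a ^ 2 + b ^ 2) / 4) ≤
      Real.exp (-(d ^ 2 / 16)) * Real.exp (-(1 / 16) * d ^ 2) := by
    rw [← Real.exp_add]
    apply Real.exp_le_exp.mpr
    linarith
  have h2 : d ^ 2 * Real.exp (-(d ^ 2 / 16)) ≤ 16 := by
    rw [Real.exp_neg, ← div_eq_mul_inv, div_le_iff₀ (Real.exp_pos _)]
    linarith [Real.add_one_le_exp (d ^ 2 / 16)]
  have h3 : Real.exp (-d ^ 2 / 8 - (a ^ 2 - b ^ 2) ^ 2 / (8 * d ^ 2)) ≤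
      Real.exp (-(1 / 16) * d ^ 2) := by
    apply Real.exp_le_exp.mpr
    have : 0 ≤ (a ^ 2 - b ^ 2) ^ 2 / (8 * d ^ 2) := by positivity
    nlinarith [sq_nonneg d]
  rw [le_div_iff₀ hd]
  have hE := Real.exp_pos (-(1 / 16) * d ^ 2)
  generalize Real.exp (-(1 / 16) * d ^ 2) = E at *
  calc _ = C₁ * (d ^ 2 * Real.exp (-(a ^ 2 + b ^ 2) / 4)) +
        C₂ * Real.exp (-d ^ 2 / 8 - (a ^ 2 - b ^ 2) ^ 2 / (8 * d ^ 2)) * (d⁻¹ * d) := by ring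
    _ = C₁ * (d ^ 2 * Real.exp (-(a ^ 2 + b ^ 2) / 4)) +
        C₂ * Real.exp (-d ^ 2 / 8 - (a ^ 2 - b ^ 2) ^ 2 / (8 * d ^ 2)) := by
      rw [inv_mul_cancel₀ hd.ne', mul_one]
    _ ≤ C₁ * (16 * E) + C₂ * E := by
      have h4 : d ^ 2 * Real.exp (-(a ^ 2 + b ^ 2) / 4) ≤ 16 * E := by
        calc _ ≤ d ^ 2 * (Real.exp (-(d ^ 2 / 16)) * E) := by gcongr
          _ = (d ^ 2 * Real.exp (-(d ^ 2 / 16))) * E := by ring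
          _ ≤ 16 * E := by gcongr
      gcongr
    _ = _ := by ring
end
end

section
/- For each θ with 0 ≤ θ < 1/4 there exists a constant C > 0 (depending on θ, C₁, C₂) such that for all ξ ∈ ℝ³, ∫_{ℝ³} (k₁(ξ,ξ') + k₂(ξ,ξ')) · e^{θ|ξ|² − θ|ξ'|²} dξ' ≤ C / (1 + |ξ|). -/
open MeasureTheory

noncomputable section

lemma gk_inner (c L r : ℝ) (hc : 0 < c) (hL : 0 ≤ L) (hr : 0 < r) :
    ∫⁻ x in Set.Ioo (-r) r, ENNReal.ofReal (Real.exp (-c * ((r ^ 2 + 2 * L * x) / r) ^ 2))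
      ≤ ENNReal.ofReal ((4 + √(Real.pi / c)) * r / (1 + L)) := by
  have hs : 0 ≤ √(Real.pi / c) := Real.sqrt_nonneg _
  rcases le_or_gt L 1 with h1 | h1
  · calc _ ≤ ∫⁻ x in Set.Ioo (-r) r, 1 := by
          apply lintegral_mono
          intro x
          simp only [ENNReal.ofReal_le_one, Real.exp_le_one_iff]
          have : 0 ≤ c * ((r ^ 2 + 2 * L * x) / r) ^ 2 := by positivity
          linarith
      _ = ENNReal.ofReal (2 * r) := by
          simp only [lintegral_const, Measure.restrict_apply_univ, Real.volume_Ioo, one_mul]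
          ring_nf
      _ ≤ _ := by
          apply ENNReal.ofReal_le_ofReal
          rw [le_div_iff₀ (by linarith)]
          nlinarith [mul_nonneg hs hr.le]
  · have hb : 0 < c * (2 * L / r) ^ 2 := by positivity
    have hf : ∀ x : ℝ, -c * ((r ^ 2 + 2 * L * x) / r) ^ 2
        = -(c * (2 * L / r) ^ 2) * (x + r ^ 2 / (2 * L)) ^ 2 := by
      intro x; have : L ≠ 0 := by positivity
      field_simp; ring
    simp_rw [hf]
    have hi := (integrable_exp_neg_mul_sq hb).comp_add_right (r ^ 2 / (2 * L))
    calc _ ≤ ∫⁻ x : ℝ, ENNReal.ofReal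
            (Real.exp (-(c * (2 * L / r) ^ 2) * (x + r ^ 2 / (2 * L)) ^ 2)) :=
          setLIntegral_le_lintegral _ _
      _ = ENNReal.ofReal (∫ x : ℝ, 
            (Real.exp (-(c * (2 * L / r) ^ 2) * (x + r ^ 2 / (2 * L)) ^ 2))) := by
          rw [ofReal_integral_eq_lintegral_ofReal hi]
          exact Filter.Eventually.of_forall fun x => (Real.exp_pos _).le
      _ ≤ _ := by
          apply ENNReal.ofReal_le_ofReal
          rw [integral_add_right_eq_self (fun x : ℝ => Real.exp (-(c * (2 * L / r) ^ 2) * x ^ 2)),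
            integral_gaussian, ← div_div, Real.sqrt_div (by positivity),
            Real.sqrt_sq (by positivity), le_div_iff₀ (by linarith)]
          have : √(Real.pi / c) / (2 * L / r) * (1 + L) = √(Real.pi / c) * r * ((1 + L) / (2 * L)) := by
            field_simp
          rw [this]
          have h2 : (1 + L) / (2 * L) ≤ 1 := by rw [div_le_one (by linarith)]; linarith
          nlinarith [mul_nonneg hs hr.le]

lemma gk_planar (g : ℝ → ENNReal) (x : ℝ) :
    ∫⁻ p : ℝ × ℝ, g (√(x ^ 2 + (p.1 ^ 2 + p.2 ^ 2)))
      ≤ ENNReal.ofReal (2 * Real.pi) * ∫⁻ r in Set.Ioi |x|, ENNReal.ofReal r * g r := by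
  rw [← lintegral_comp_polarCoord_symm]
  have h1 : ∀ p : ℝ × ℝ, (polarCoord.symm p).1 ^ 2 + (polarCoord.symm p).2 ^ 2 = p.1 ^ 2 := by
    intro p
    simp only [polarCoord_symm_apply]
    nlinarith [Real.sin_sq_add_cos_sq p.2]
  simp_rw [h1]
  rw [polarCoord_target, Measure.volume_eq_prod, ← Measure.prod_restrict]
  refine (lintegral_prod_le _).trans ?_
  simp only [lintegral_const, smul_eq_mul, Measure.restrict_apply_univ, Real.volume_Ioo]
  rw [lintegral_mul_const' _ _ ENNReal.ofReal_ne_top, mul_comm]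
  rw [show Real.pi - -Real.pi = 2 * Real.pi by ring]
  gcongr ENNReal.ofReal (2 * Real.pi) * ?_
  have hd : ∀ ρ ∈ Set.Ioi (0:ℝ), HasDerivWithinAt (fun ρ : ℝ => √(x ^ 2 + ρ ^ 2))
      (ρ / √(x ^ 2 + ρ ^ 2)) (Set.Ioi 0) ρ := by
    intro ρ hρ
    have hρ : 0 < ρ := hρ
    have := (((hasDerivAt_id ρ).pow 2).const_add (x ^ 2)).sqrt (by simp; positivity)
    refine (this.congr_deriv ?_).hasDerivWithinAt
    simp
    field_simp
  have hinj : Set.InjOn (fun ρ : ℝ => √(x ^ 2 + ρ ^ 2)) (Set.Ioi 0) := by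
    intro a ha b hb hab
    have ha : 0 < a := ha
    have hb : 0 < b := hb
    have := (Real.sqrt_inj (by positivity) (by positivity)).1 hab
    have h2 : a ^ 2 = b ^ 2 := by linarith
    exact (sq_eq_sq₀ ha.le hb.le).1 h2
  have := lintegral_image_eq_lintegral_abs_deriv_mul measurableSet_Ioi hd hinj
    (fun r => ENNReal.ofReal r * g r)
  calc _ = ∫⁻ ρ in Set.Ioi (0:ℝ), ENNReal.ofReal |ρ / √(x ^ 2 + ρ ^ 2)| *
          (ENNReal.ofReal √(x ^ 2 + ρ ^ 2) * g √(x ^ 2 + ρ ^ 2)) := by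
        apply setLIntegral_congr_fun measurableSet_Ioi
        intro ρ hρ
        have hρ : 0 < ρ := hρ
        have : 0 < √(x ^ 2 + ρ ^ 2) := Real.sqrt_pos.2 (by positivity)
        simp only
        rw [← mul_assoc, ← ENNReal.ofReal_mul (abs_nonneg _), abs_of_pos (by positivity),
          div_mul_cancel₀ _ this.ne']
    _ ≤ _ := by
        rw [← this]
        apply lintegral_mono_set
        rintro _ ⟨ρ, hρ, rfl⟩
        have hρ : 0 < ρ := hρ
        simp only [Set.mem_Ioi]
        apply Real.lt_sqrt_of_sq_lt
        rw [sq_abs]; nlinarith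

lemma gk_spatial (G : ℝ → ℝ → ENNReal) (hG : Measurable (Function.uncurry G)) :
    ∫⁻ w : EuclideanSpace ℝ (Fin 3), G (w 0) ‖w‖
      ≤ ENNReal.ofReal (2 * Real.pi) *
        ∫⁻ r in Set.Ioi 0, ∫⁻ x in Set.Ioo (-r) r, ENNReal.ofReal r * G x r := by
  have e1 : ∫⁻ w : EuclideanSpace ℝ (Fin 3), G (w 0) ‖w‖ =
      ∫⁻ q : ℝ × (ℝ × ℝ), G q.1 (√(q.1 ^ 2 + (q.2.1 ^ 2 + q.2.2 ^ 2))) := by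
    have hmp : MeasurePreserving (fun w : EuclideanSpace ℝ (Fin 3) => (w 0, (w 1, w 2))) := by
      have a := PiLp.volume_preserving_ofLp (Fin 3)
      have b := volume_preserving_piFinSuccAbove (fun _ : Fin 3 => ℝ) 0
      have c := (MeasurePreserving.id (volume : Measure ℝ)).prod (volume_preserving_finTwoArrow ℝ)
      exact (c.comp b).comp a
    have hm : Measurable fun q : ℝ × (ℝ × ℝ) => G q.1 (√(q.1 ^ 2 + (q.2.1 ^ 2 + q.2.2 ^ 2))) :=
      hG.comp (f := fun q : ℝ × (ℝ × ℝ) => (q.1, √(q.1 ^ 2 + (q.2.1 ^ 2 + q.2.2 ^ 2)))) (by fun_prop)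
    rw [← hmp.lintegral_comp hm]
    congr with w
    rw [EuclideanSpace.norm_eq, Fin.sum_univ_three]
    simp [add_assoc]
  rw [e1, Measure.volume_eq_prod]
  refine (lintegral_prod_le _).trans ?_
  calc _ ≤ ∫⁻ x : ℝ, ENNReal.ofReal (2 * Real.pi) *
          ∫⁻ r in Set.Ioi |x|, ENNReal.ofReal r * G x r :=
        lintegral_mono fun x => gk_planar (G x) x
    _ = ENNReal.ofReal (2 * Real.pi) *
          ∫⁻ x : ℝ, ∫⁻ r in Set.Ioi |x|, ENNReal.ofReal r * G x r :=
        lintegral_const_mul' _ _ ENNReal.ofReal_ne_top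
    _ ≤ _ := by
        gcongr ENNReal.ofReal (2 * Real.pi) * ?_
        have hG' : Measurable fun q : ℝ × ℝ => ENNReal.ofReal q.2 * G q.1 q.2 :=
          (by fun_prop : Measurable fun q : ℝ × ℝ => ENNReal.ofReal q.2).mul hG
        have hS : MeasurableSet {q : ℝ × ℝ | |q.1| < q.2} :=
          measurableSet_lt (by fun_prop) (by fun_prop)
        have e2 : ∀ x : ℝ, ∫⁻ r in Set.Ioi |x|, ENNReal.ofReal r * G x r = 
            ∫⁻ r, ({q : ℝ × ℝ | |q.1| < q.2}.indicator
              (fun q => ENNReal.ofReal q.2 * G q.1 q.2)) (x, r) := by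
          intro x
          rw [← lintegral_indicator measurableSet_Ioi]
          rfl
        rw [lintegral_congr e2]
        rw [lintegral_lintegral_swap (f := fun x r => ({q : ℝ × ℝ | |q.1| < q.2}.indicator
              (fun q => ENNReal.ofReal q.2 * G q.1 q.2)) (x, r)) (hG'.indicator hS).aemeasurable,
          ← lintegral_indicator measurableSet_Ioi]
        apply lintegral_mono
        intro r
        simp only
        by_cases hr : 0 < r
        · rw [Set.indicator_of_mem (by exact hr), ← lintegral_indicator measurableSet_Ioo]
          apply lintegral_mono
          intro x
          by_cases hx : |x| < r
          · have : x ∈ Set.Ioo (-r) r := abs_lt.1 hx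
            simp [Set.indicator, hx, abs_lt.1 hx]
          · simp [Set.indicator, hx]
        · have : ∀ x : ℝ, ¬ |x| < r := fun x h => hr ((abs_nonneg x).trans_lt h)
          simp [Set.indicator, this]

lemma gk_k2 (c : ℝ) (hc : 0 < c) : ∃ B : ℝ, 0 ≤ B ∧ ∀ ξ : EuclideanSpace ℝ (Fin 3),
    ∫⁻ ξ' : EuclideanSpace ℝ (Fin 3), ENNReal.ofReal (‖ξ - ξ'‖⁻¹ *
      Real.exp (-c * ‖ξ - ξ'‖ ^ 2 - c * ((‖ξ'‖ ^ 2 - ‖ξ‖ ^ 2) / ‖ξ - ξ'‖) ^ 2))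
      ≤ ENNReal.ofReal (B / (1 + ‖ξ‖)) := by
  have hA : 0 ≤ ∫ r in Set.Ioi (0:ℝ), r * Real.exp (-c * r ^ 2) :=
    setIntegral_nonneg measurableSet_Ioi fun r hr => mul_nonneg (le_of_lt hr) (Real.exp_pos _).le
  refine ⟨2 * Real.pi * ((4 + √(Real.pi / c)) * ∫ r in Set.Ioi (0:ℝ), r * Real.exp (-c * r ^ 2)),
    by positivity, fun ξ => ?_⟩
  obtain ⟨u, hu, hξ⟩ : ∃ u : EuclideanSpace ℝ (Fin 3), ‖u‖ = 1 ∧ ξ = ‖ξ‖ • u := by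
    by_cases h : ξ = 0
    · exact ⟨EuclideanSpace.single 0 1, by simp, by simp [h]⟩
    · have : ‖ξ‖ ≠ 0 := norm_ne_zero_iff.2 h
      exact ⟨‖ξ‖⁻¹ • ξ, by simp [norm_smul, this], by simp [smul_smul, this]⟩
  obtain ⟨b, hb⟩ := Orthonormal.exists_orthonormalBasis_extension_of_card_eq (𝕜 := ℝ)
    (E := EuclideanSpace ℝ (Fin 3)) (ι := Fin 3) (by simp) (v := fun _ => u) (s := {0}) (by
      constructor
      · intro i; simpa using hu
      · intro i j hij; exact (hij (Subsingleton.elim _ _)).elim)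
  have hb0 : b 0 = u := hb 0 rfl
  set L := ‖ξ‖ with hL
  have hL0 : 0 ≤ L := norm_nonneg _
  let G : ℝ → ℝ → ENNReal := fun x r => ENNReal.ofReal (r⁻¹ *
      Real.exp (-c * r ^ 2 - c * ((r ^ 2 + 2 * L * x) / r) ^ 2))
  have hG : Measurable (Function.uncurry G) := by
    simp only [G, Function.uncurry_def]; fun_prop
  rw [← lintegral_add_left_eq_self _ ξ,
    ← b.measurePreserving_repr_symm.lintegral_comp_emb
      b.repr.symm.toHomeomorph.measurableEmbedding]
  have key : ∀ w : EuclideanSpace ℝ (Fin 3), ENNReal.ofReal (‖ξ - (ξ + b.repr.symm w)‖⁻¹ *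
      Real.exp (-c * ‖ξ - (ξ + b.repr.symm w)‖ ^ 2 - c * ((‖ξ + b.repr.symm w‖ ^ 2 - L ^ 2)
        / ‖ξ - (ξ + b.repr.symm w)‖) ^ 2)) = G (w 0) ‖w‖ := by
    intro w
    have n1 : ‖ξ - (ξ + b.repr.symm w)‖ = ‖w‖ := by
      rw [sub_add_cancel_left, norm_neg, LinearIsometryEquiv.norm_map]
    have n2 : ‖ξ + b.repr.symm w‖ ^ 2 - L ^ 2 = ‖w‖ ^ 2 + 2 * L * w 0 := by
      have : inner ℝ ξ (b.repr.symm w) = L * w 0 := by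
        rw [hξ, inner_smul_left, ← hb0, ← b.repr_apply_apply]
        simp
      rw [norm_add_sq_real, this, LinearIsometryEquiv.norm_map]
      ring
    rw [n1, n2]
  simp_rw [key]
  refine (gk_spatial G hG).trans ?_
  have hintg : IntegrableOn (fun r : ℝ => r * Real.exp (-c * r ^ 2)) (Set.Ioi 0) :=
    (integrable_mul_exp_neg_mul_sq hc).integrableOn
  calc _ ≤ ENNReal.ofReal (2 * Real.pi) * ∫⁻ r in Set.Ioi (0:ℝ),
          ENNReal.ofReal ((4 + √(Real.pi / c)) / (1 + L)) *
            ENNReal.ofReal (r * Real.exp (-c * r ^ 2)) := by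
        gcongr ENNReal.ofReal (2 * Real.pi) * ?_
        apply setLIntegral_mono' measurableSet_Ioi
        intro r hr
        have hr : 0 < r := hr
        have e : ∀ x, ENNReal.ofReal r * G x r = ENNReal.ofReal (Real.exp (-c * r ^ 2)) *
            ENNReal.ofReal (Real.exp (-c * ((r ^ 2 + 2 * L * x) / r) ^ 2)) := by
          intro x
          simp only [G]
          rw [← ENNReal.ofReal_mul hr.le, ← ENNReal.ofReal_mul (Real.exp_pos _).le,
            ← Real.exp_add, mul_inv_cancel_left₀ hr.ne']
          ring_nf
        simp_rw [e]
        rw [lintegral_const_mul' _ _ ENNReal.ofReal_ne_top]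
        calc _ ≤ ENNReal.ofReal (Real.exp (-c * r ^ 2)) *
              ENNReal.ofReal ((4 + √(Real.pi / c)) * r / (1 + L)) := by
                gcongr; exact gk_inner c L r hc hL0 hr
          _ = _ := by
            rw [← ENNReal.ofReal_mul (Real.exp_pos _).le, ← ENNReal.ofReal_mul (by positivity)]
            ring_nf
    _ = _ := by
        rw [lintegral_const_mul' _ _ ENNReal.ofReal_ne_top,
          ← ofReal_integral_eq_lintegral_ofReal hintg
            ((ae_restrict_iff' measurableSet_Ioi).2 (Filter.Eventually.of_forall fun r hr =>
              mul_nonneg (le_of_lt hr) (Real.exp_pos _).le)),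
          ← ENNReal.ofReal_mul (by positivity), ← ENNReal.ofReal_mul (by positivity)]
        ring_nf

lemma gk_int : Integrable (fun v : EuclideanSpace ℝ (Fin 3) => Real.exp (-(1/8) * ‖v‖ ^ 2)) := by
  have := (GaussianFourier.integrable_cexp_neg_mul_sq_norm_add (V := EuclideanSpace ℝ (Fin 3))
    (b := ((1/8 : ℝ) : ℂ)) (by simp) 0 0).norm
  refine this.congr (Filter.Eventually.of_forall fun v => ?_)
  simp only [Complex.norm_exp]
  congr 1
  simp [← Complex.ofReal_pow]

lemma gk_quad (θ a b : ℝ) (h0 : 0 ≤ θ) :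
    -a ^ 2 / 8 - b ^ 2 / 8 - θ * (a * b) ≤
      -((1 - 4 * θ) / 8) * a ^ 2 - ((1 - 4 * θ) / 8) * b ^ 2 := by
  nlinarith [mul_nonneg h0 (sq_nonneg (a + b))]


lemma gk_k1 (θ L m n : ℝ) (h0 : 0 ≤ θ) (h1 : θ < 1/4) (hL : 0 ≤ L) (hm : 0 ≤ m) (hn : n ≤ L + m) :
    n * Real.exp (-(L ^ 2 + m ^ 2) / 4) * Real.exp (θ * L ^ 2 - θ * m ^ 2) ≤
      (2 + 2 / (1/4 - θ)) / (1 + L) * (3 * Real.exp (-(1/8) * m ^ 2)) := by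
  have hd : 0 < 1/4 - θ := by linarith
  set d := 1/4 - θ with hdd
  have b1 : (1 + L) * Real.exp (-(d * L ^ 2)) ≤ (2 + 2 / d) / (1 + L) := by
    rw [le_div_iff₀ (by linarith), Real.exp_neg]
    have e1 := Real.add_one_le_exp (d * L ^ 2)
    rw [mul_right_comm, ← div_eq_mul_inv, div_le_iff₀ (Real.exp_pos _)]
    calc (1 + L) * (1 + L) ≤ (2 + 2 / d) * (d * L ^ 2 + 1) := by
          have : (2 + 2 / d) * (d * L ^ 2 + 1) = 2 * d * L ^ 2 + 2 + 2 * L ^ 2 + 2 / d := by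
            field_simp; ring
          rw [this]
          have : 0 ≤ 2 / d := by positivity
          nlinarith [sq_nonneg (1 - L), mul_nonneg hd.le (sq_nonneg L)]
      _ ≤ _ := by gcongr
  have b2 : (1 + m) * Real.exp (-(m ^ 2 / 4)) ≤ 3 * Real.exp (-(1/8) * m ^ 2) := by
    have : Real.exp (-(1/8) * m ^ 2) = Real.exp (m ^ 2 / 8) * Real.exp (-(m ^ 2 / 4)) := by
      rw [← Real.exp_add]; ring_nf
    rw [this, ← mul_assoc]
    gcongr
    nlinarith [Real.add_one_le_exp (m ^ 2 / 8), sq_nonneg (m - 4/3)]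
  calc _ = n * Real.exp (-(L ^ 2 + m ^ 2) / 4 + (θ * L ^ 2 - θ * m ^ 2)) := by
        rw [mul_assoc, ← Real.exp_add]
    _ ≤ ((1 + L) * (1 + m)) * Real.exp (-(d * L ^ 2) + -(m ^ 2 / 4)) := by
        apply mul_le_mul
        · nlinarith [mul_nonneg hL hm]
        · apply Real.exp_le_exp.2
          rw [hdd]; nlinarith [mul_nonneg h0 (sq_nonneg m)]
        · positivity
        · positivity
    _ = ((1 + L) * Real.exp (-(d * L ^ 2))) * ((1 + m) * Real.exp (-(m ^ 2 / 4))) := by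
        rw [Real.exp_add]; ring
    _ ≤ _ := by gcongr

/-- for `0 ≤ θ < 1/4`,
`∫ (k₁(ξ,ξ')+k₂(ξ,ξ')) e^{θ|ξ|²−θ|ξ'|²} dξ' ≤ C/(1+|ξ|)`. -/
theorem grad_kernel_integral_bound (θ C₁ C₂ : ℝ)
    (hθ₀ : 0 ≤ θ) (hθ : θ < 1/4) (hC₁ : 0 < C₁) (hC₂ : 0 < C₂) :
    ∃ C > (0:ℝ), ∀ ξ : EuclideanSpace ℝ (Fin 3),
      (∫ ξ' : EuclideanSpace ℝ (Fin 3),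
          (gradK1 C₁ ξ ξ' + gradK2 C₂ ξ ξ') *
            Real.exp (θ * ‖ξ‖ ^ 2 - θ * ‖ξ'‖ ^ 2)) ≤ C / (1 + ‖ξ‖) := by
  have hd : 0 < 1/4 - θ := by linarith
  obtain ⟨B, hB, hB2⟩ := gk_k2 ((1 - 4 * θ) / 8) (by linarith)
  set c := (1 - 4 * θ) / 8 with hc
  have hJ0 : 0 ≤ ∫ v : EuclideanSpace ℝ (Fin 3), Real.exp (-(1/8) * ‖v‖ ^ 2) :=
    integral_nonneg fun v => (Real.exp_pos _).le
  set J := ∫ v : EuclideanSpace ℝ (Fin 3), Real.exp (-(1/8) * ‖v‖ ^ 2) with hJ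
  set D := C₁ * (2 + 2 / (1/4 - θ)) * 3 with hD
  have hD0 : 0 < D := by positivity
  refine ⟨D * J + C₂ * B + 1, by positivity, fun ξ => ?_⟩
  set L := ‖ξ‖ with hL
  have hL0 : 0 ≤ L := norm_nonneg _
  have hmeas : Measurable fun ξ' : EuclideanSpace ℝ (Fin 3) =>
      (gradK1 C₁ ξ ξ' + gradK2 C₂ ξ ξ') * Real.exp (θ * L ^ 2 - θ * ‖ξ'‖ ^ 2) := by
    unfold gradK1 gradK2; fun_prop
  rw [integral_eq_lintegral_of_nonneg_ae (Filter.Eventually.of_forall fun ξ' => by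
    simp only [gradK1, gradK2, Pi.zero_apply]; positivity) hmeas.aestronglyMeasurable]
  apply ENNReal.toReal_le_of_le_ofReal (by positivity)
  have key : ∀ ξ' : EuclideanSpace ℝ (Fin 3),
      (gradK1 C₁ ξ ξ' + gradK2 C₂ ξ ξ') * Real.exp (θ * L ^ 2 - θ * ‖ξ'‖ ^ 2) ≤
      D / (1 + L) * Real.exp (-(1/8) * ‖ξ'‖ ^ 2) + C₂ * (‖ξ - ξ'‖⁻¹ *
      Real.exp (-c * ‖ξ - ξ'‖ ^ 2 - c * ((‖ξ'‖ ^ 2 - L ^ 2) / ‖ξ - ξ'‖) ^ 2)) := by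
    intro ξ'
    rw [add_mul]
    apply add_le_add
    · have := gk_k1 θ L ‖ξ'‖ ‖ξ - ξ'‖ hθ₀ hθ hL0 (norm_nonneg _) (norm_sub_le _ _)
      have := mul_le_mul_of_nonneg_left this hC₁.le
      unfold gradK1
      calc _ = _ := by ring
        _ ≤ _ := this
        _ = _ := by rw [hD]; ring
    · unfold gradK2
      rw [mul_assoc, mul_assoc, ← Real.exp_add]
      by_cases h : ‖ξ - ξ'‖ = 0
      · simp [h]
      gcongr
      have := gk_quad θ ‖ξ - ξ'‖ ((‖ξ'‖ ^ 2 - L ^ 2) / ‖ξ - ξ'‖) hθ₀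
      rw [← hc] at this
      refine le_trans (le_of_eq ?_) this
      rw [← hL]
      field_simp
      ring
  calc _ ≤ ∫⁻ ξ' : EuclideanSpace ℝ (Fin 3),
        (ENNReal.ofReal (D / (1 + L)) * ENNReal.ofReal (Real.exp (-(1/8) * ‖ξ'‖ ^ 2)) +
        ENNReal.ofReal C₂ * ENNReal.ofReal (‖ξ - ξ'‖⁻¹ *
      Real.exp (-c * ‖ξ - ξ'‖ ^ 2 - c * ((‖ξ'‖ ^ 2 - L ^ 2) / ‖ξ - ξ'‖) ^ 2))) := by
        apply lintegral_mono
        intro ξ'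
        simp only
        rw [← ENNReal.ofReal_mul (by positivity), ← ENNReal.ofReal_mul (by positivity),
          ← ENNReal.ofReal_add (by positivity) (by positivity)]
        exact ENNReal.ofReal_le_ofReal (key ξ')
    _ ≤ ENNReal.ofReal (D / (1 + L)) * ENNReal.ofReal J +
        ENNReal.ofReal C₂ * ENNReal.ofReal (B / (1 + L)) := by
        rw [lintegral_add_left (by fun_prop), lintegral_const_mul' _ _ ENNReal.ofReal_ne_top,
          lintegral_const_mul' _ _ ENNReal.ofReal_ne_top,
          ← ofReal_integral_eq_lintegral_ofReal gk_int
            (Filter.Eventually.of_forall fun v => (Real.exp_pos _).le)]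
        gcongr
        exact hB2 ξ
    _ ≤ _ := by
        rw [← ENNReal.ofReal_mul (by positivity), ← ENNReal.ofReal_mul (by positivity),
          ← ENNReal.ofReal_add (by positivity) (by positivity)]
        apply ENNReal.ofReal_le_ofReal
        rw [div_mul_eq_mul_div, mul_div_assoc', ← add_div]
        apply div_le_div_of_nonneg_right _ (by positivity)
        linarith
end
end

section
/- For each θ with 0 ≤ θ < 1/4 there exist constants C > 0 and ϱ > 0 (depending on θ, C₁, C₂) such that for all ξ ≠ ξ' in ℝ³, (k₁(ξ,ξ') + k₂(ξ,ξ')) · e^{θ|ξ|² − θ|ξ'|²} ≤ C · e^{−ϱ|ξ−ξ'|²} / |ξ−ξ'|. -/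
noncomputable section

/-- for `0 ≤ θ < 1/4`, the weighted Grad kernel satisfies the
pointwise bound
`(k₁(ξ,ξ')+k₂(ξ,ξ')) e^{θ|ξ|²−θ|ξ'|²} ≤ C e^{−ϱ|ξ−ξ'|²}/|ξ−ξ'|`. -/
theorem grad_kernel_weighted_bound (θ C₁ C₂ : ℝ)
    (hθ₀ : 0 ≤ θ) (hθ : θ < 1/4) (hC₁ : 0 < C₁) (hC₂ : 0 < C₂) :
    ∃ C > (0:ℝ), ∃ ϱ > (0:ℝ), ∀ ξ ξ' : EuclideanSpace ℝ (Fin 3), ξ ≠ ξ' →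
      (gradK1 C₁ ξ ξ' + gradK2 C₂ ξ ξ') * Real.exp (θ * ‖ξ‖ ^ 2 - θ * ‖ξ'‖ ^ 2) ≤
        C * Real.exp (-ϱ * ‖ξ - ξ'‖ ^ 2) / ‖ξ - ξ'‖ := by
  have ha : 0 < 1/4 - θ := by linarith
  refine ⟨C₁ * (4 / (1/4 - θ)) + C₂, by positivity, (1/4 - θ) / 4, by positivity, ?_⟩
  intro ξ ξ' hne
  have hd : 0 < ‖ξ - ξ'‖ := norm_pos_iff.mpr (sub_ne_zero.mpr hne)
  have htri : ‖ξ - ξ'‖ ≤ ‖ξ‖ + ‖ξ'‖ := norm_sub_le ξ ξ'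
  have hx : 0 ≤ ‖ξ‖ := norm_nonneg _
  have hy : 0 ≤ ‖ξ'‖ := norm_nonneg _
  unfold gradK1 gradK2
  generalize ‖ξ - ξ'‖ = d at *
  generalize ‖ξ‖ = x at *
  generalize ‖ξ'‖ = y at *
  have hd2 : d ^ 2 ≤ 2 * (x ^ 2 + y ^ 2) := by nlinarith [sq_nonneg (x - y)]
  -- second kernel
  have h2 : Real.exp (-d ^ 2 / 8 - (x ^ 2 - y ^ 2) ^ 2 / (8 * d ^ 2)) *
      Real.exp (θ * x ^ 2 - θ * y ^ 2) ≤ Real.exp (-((1/4 - θ) / 4) * d ^ 2) := by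
    rw [← Real.exp_add]
    apply Real.exp_le_exp.mpr
    have h0 : 0 ≤ (x ^ 2 - y ^ 2 - 4 * θ * d ^ 2) ^ 2 / (8 * d ^ 2) := by positivity
    have h1 : (x ^ 2 - y ^ 2 - 4 * θ * d ^ 2) ^ 2 / (8 * d ^ 2) =
        (x ^ 2 - y ^ 2) ^ 2 / (8 * d ^ 2) - θ * (x ^ 2 - y ^ 2) + 2 * θ ^ 2 * d ^ 2 := by
      field_simp
      ring
    have h3 : 0 ≤ (1/8 - 2 * θ ^ 2 - (1/4 - θ) / 4) * d ^ 2 := by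
      apply mul_nonneg _ (sq_nonneg d)
      nlinarith
    linarith
  -- first kernel
  have h1 : Real.exp (-(x ^ 2 + y ^ 2) / 4) * Real.exp (θ * x ^ 2 - θ * y ^ 2) ≤
      Real.exp (-((1/4 - θ) / 4) * d ^ 2) * Real.exp (-((1/4 - θ) / 4 * d ^ 2)) := by
    rw [← Real.exp_add, ← Real.exp_add]
    apply Real.exp_le_exp.mpr
    have := mul_le_mul_of_nonneg_left hd2 ha.le
    have := mul_nonneg hθ₀ (sq_nonneg y)
    linarith
  have h4 : d ^ 2 * Real.exp (-((1/4 - θ) / 4 * d ^ 2)) ≤ 4 / (1/4 - θ) := by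
    rw [Real.exp_neg, ← div_eq_mul_inv, div_le_iff₀ (Real.exp_pos _)]
    have h5 : (1/4 - θ) / 4 * d ^ 2 ≤ Real.exp ((1/4 - θ) / 4 * d ^ 2) := by
      linarith [Real.add_one_le_exp ((1/4 - θ) / 4 * d ^ 2)]
    calc d ^ 2 = 4 / (1/4 - θ) * ((1/4 - θ) / 4 * d ^ 2) := by
          have := ha.ne'
          generalize 1/4 - θ = a at *
          field_simp
      _ ≤ _ := mul_le_mul_of_nonneg_left h5 (by positivity)
  rw [le_div_iff₀ hd]
  have hE := Real.exp_pos (-((1/4 - θ) / 4) * d ^ 2)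
  generalize Real.exp (-((1/4 - θ) / 4) * d ^ 2) = E at *
  generalize Real.exp (-((1/4 - θ) / 4 * d ^ 2)) = F at *
  generalize Real.exp (θ * x ^ 2 - θ * y ^ 2) = W at *
  generalize Real.exp (-(x ^ 2 + y ^ 2) / 4) = G at *
  generalize Real.exp (-d ^ 2 / 8 - (x ^ 2 - y ^ 2) ^ 2 / (8 * d ^ 2)) = K at *
  calc (C₁ * d * G + C₂ * d⁻¹ * K) * W * d
      = C₁ * d ^ 2 * (G * W) + C₂ * (K * W) := by field_simp
    _ ≤ C₁ * d ^ 2 * (E * F) + C₂ * E := by gcongr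
    _ = C₁ * (d ^ 2 * F) * E + C₂ * E := by ring
    _ ≤ C₁ * (4 / (1/4 - θ)) * E + C₂ * E := by gcongr
    _ = _ := by ring
end
end

section
/- There exists θ̃₀ ∈ (0,1/4) such that for every θ̃ ∈ (0, θ̃₀] there exist constants C > 0 and ϱ > 0 with the following property: for all ξ ≠ ξ' in ℝ³, the gradients in ξ of the Grad kernels satisfy (|∇_ξ k₁(ξ,ξ')| + |∇_ξ k₂(ξ,ξ')|) · e^{θ̃|ξ|² − θ̃|ξ'|²} ≤ C (1 + |ξ|²) · e^{−ϱ|ξ−ξ'|²} / |ξ−ξ'|². -/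
noncomputable section

abbrev E3 := EuclideanSpace ℝ (Fin 3)

lemma aux_norm_sub (ξ ξ' : E3) (h : ξ ≠ ξ') :
    ∃ L : E3 →L[ℝ] ℝ, HasFDerivAt (fun η : E3 => ‖η - ξ'‖) L ξ ∧ ‖L‖ ≤ 1 := by
  have hd : DifferentiableAt ℝ (fun η : E3 => ‖η - ξ'‖) ξ :=
    (differentiableAt_id.sub_const ξ').norm ℝ (sub_ne_zero.mpr h)
  refine ⟨_, hd.hasFDerivAt, ?_⟩
  have hl : LipschitzWith 1 (fun η : E3 => ‖η - ξ'‖) := by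
    refine LipschitzWith.of_dist_le_mul fun x y => ?_
    have := abs_norm_sub_norm_le (x - ξ') (y - ξ')
    simpa [Real.dist_eq, dist_eq_norm] using this
  simpa using norm_fderiv_le_of_lipschitz ℝ hl (x₀ := ξ)

lemma aux_norm_sq (ξ : E3) :
    ∃ M : E3 →L[ℝ] ℝ, HasFDerivAt (fun η : E3 => ‖η‖ ^ 2) M ξ ∧ ‖M‖ ≤ 2 * ‖ξ‖ := by
  refine ⟨_, (hasStrictFDerivAt_norm_sq ξ).hasFDerivAt, ?_⟩
  rw [← Nat.cast_smul_eq_nsmul ℝ, norm_smul, innerSL_apply_norm]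
  simp

lemma aux_comb (L M : E3 →L[ℝ] ℝ) (a α β : ℝ) (hL : ‖L‖ ≤ 1) (hM : ‖M‖ ≤ 2 * a) :
    ‖α • L + β • M‖ ≤ |α| + |β| * (2 * a) := by
  refine (norm_add_le _ _).trans ?_
  rw [norm_smul, norm_smul, Real.norm_eq_abs, Real.norm_eq_abs]
  have h1 := mul_le_mul_of_nonneg_left hL (abs_nonneg α)
  have h2 := mul_le_mul_of_nonneg_left hM (abs_nonneg β)
  linarith

lemma aux_k1 (C₁ : ℝ) (hC₁ : 0 < C₁) (ξ ξ' : E3) (h : ξ ≠ ξ') :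
    ‖fderiv ℝ (fun η => gradK1 C₁ η ξ') ξ‖ ≤
      C₁ * (1 + ‖ξ - ξ'‖ * ‖ξ‖ / 2) * Real.exp (-(‖ξ‖ ^ 2 + ‖ξ'‖ ^ 2) / 4) := by
  obtain ⟨L, hL, hL1⟩ := aux_norm_sub ξ ξ' h
  obtain ⟨M, hM, hM1⟩ := aux_norm_sq ξ
  set e := Real.exp (-(‖ξ‖ ^ 2 + ‖ξ'‖ ^ 2) / 4) with he
  have hep : 0 < e := Real.exp_pos _
  have hg : HasDerivAt (fun n : ℝ => Real.exp (-(n + ‖ξ'‖ ^ 2) / 4)) (e * (-1 / 4)) (‖ξ‖ ^ 2) := by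
    have := (((hasDerivAt_id (‖ξ‖ ^ 2)).add_const (‖ξ'‖ ^ 2)).neg.div_const 4).exp
    refine this.congr_deriv ?_
    simp only [he, id, Pi.neg_apply]
  have hE := hg.comp_hasFDerivAt ξ hM
  have hk : HasFDerivAt (fun η => gradK1 C₁ η ξ')
      ((C₁ * e) • L + (-(C₁ * ‖ξ - ξ'‖ * e / 4)) • M) ξ := by
    have := (hL.const_mul C₁).mul hE
    refine this.congr_fderiv ?_
    ext v
    simp only [add_apply, smul_apply, smul_eq_mul, Function.comp_apply, ← he]
    ring
  rw [hk.fderiv]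
  refine (aux_comb L M ‖ξ‖ _ _ hL1 hM1).trans ?_
  rw [abs_neg, abs_of_nonneg (by positivity), abs_of_nonneg (by positivity)]
  apply le_of_eq; ring

lemma aux_k2 (C₂ : ℝ) (hC₂ : 0 < C₂) (ξ ξ' : E3) (h : ξ ≠ ξ') (r s : ℝ)
    (hr : r = ‖ξ - ξ'‖) (hs : s = |‖ξ‖ ^ 2 - ‖ξ'‖ ^ 2| / r) :
    ‖fderiv ℝ (fun η => gradK2 C₂ η ξ') ξ‖ ≤
      C₂ * (1 + r ^ 2 / 4 + s * ‖ξ‖ / 2 + s ^ 2 / 4) * Real.exp (-r ^ 2 / 8 - s ^ 2 / 8) / r ^ 2 := by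
  obtain ⟨L, hL, hL1⟩ := aux_norm_sub ξ ξ' h
  obtain ⟨M, hM, hM1⟩ := aux_norm_sq ξ
  have hrp : 0 < r := by rw [hr]; exact norm_pos_iff.mpr (sub_ne_zero.mpr h)
  have hr0 : r ≠ 0 := hrp.ne'
  set d := ‖ξ‖ ^ 2 - ‖ξ'‖ ^ 2 with hd
  have hs2 : s ^ 2 = d ^ 2 / r ^ 2 := by rw [hs, div_pow, sq_abs]
  set e := Real.exp (-r ^ 2 / 8 - s ^ 2 / 8) with he
  have hep : 0 < e := Real.exp_pos _
  have hL2 : HasFDerivAt (fun η : E3 => ‖η - ξ'‖⁻¹) ((-(r ^ 2)⁻¹) • L) ξ := by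
    have h1 : HasDerivAt (fun x : ℝ => x⁻¹) (-(r ^ 2)⁻¹) ‖ξ - ξ'‖ := by
      rw [← hr]; exact hasDerivAt_inv hr0
    exact h1.comp_hasFDerivAt ξ hL
  have hR2 : HasFDerivAt (fun η : E3 => -‖η - ξ'‖ ^ 2 / 8) ((-(r / 4)) • L) ξ := by
    have h1 : HasDerivAt (fun x : ℝ => -x ^ 2 / 8) (-(r / 4)) ‖ξ - ξ'‖ := by
      rw [← hr]
      have := ((hasDerivAt_pow 2 r).neg.div_const 8)
      refine this.congr_deriv ?_
      norm_num; ring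
    exact h1.comp_hasFDerivAt ξ hL
  have hR3 : HasFDerivAt (fun η : E3 => (8 * ‖η - ξ'‖ ^ 2)⁻¹) ((-(1 / (4 * r ^ 3))) • L) ξ := by
    have h1 : HasDerivAt (fun x : ℝ => (8 * x ^ 2)⁻¹) (-(1 / (4 * r ^ 3))) ‖ξ - ξ'‖ := by
      rw [← hr]
      have := ((hasDerivAt_pow 2 r).const_mul 8).inv (by positivity)
      refine this.congr_deriv ?_
      field_simp; norm_num; ring
    exact HasDerivAt.comp_hasFDerivAt (h₂ := fun x : ℝ => (8 * x ^ 2)⁻¹) ξ h1 hL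
  have hD : HasFDerivAt (fun η : E3 => (‖η‖ ^ 2 - ‖ξ'‖ ^ 2) ^ 2) ((2 * d) • M) ξ := by
    have h1 : HasDerivAt (fun x : ℝ => (x - ‖ξ'‖ ^ 2) ^ 2) (2 * d) (‖ξ‖ ^ 2) := by
      have := ((hasDerivAt_id (‖ξ‖ ^ 2)).sub_const (‖ξ'‖ ^ 2)).pow 2
      refine this.congr_deriv ?_
      simp [hd]
    exact h1.comp_hasFDerivAt ξ hM
  have hE := (hR2.sub (hD.mul hR3)).exp
  have hev : Real.exp (-‖ξ - ξ'‖ ^ 2 / 8 - (‖ξ‖ ^ 2 - ‖ξ'‖ ^ 2) ^ 2 * (8 * ‖ξ - ξ'‖ ^ 2)⁻¹) = e := by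
    rw [he, ← hr, ← hd, hs2]; congr 1; field_simp
  have hk : HasFDerivAt (fun η => gradK2 C₂ η ξ')
      ((C₂ * e * (-(1 / r ^ 2) - 1 / 4 + d ^ 2 / (4 * r ^ 4))) • L
        + (-(C₂ * e * d / (4 * r ^ 3))) • M) ξ := by
    have := (hL2.const_mul C₂).mul hE
    refine HasFDerivAt.congr_fderiv (f' := _) this ?_
    ext v
    simp only [add_apply, smul_apply, sub_apply, smul_eq_mul, Pi.sub_apply, Pi.mul_apply]
    rw [hev, ← hr, ← hd]
    field_simp
    ring
  rw [hk.fderiv]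
  refine (aux_comb L M ‖ξ‖ _ _ hL1 hM1).trans ?_
  have hdr : |d| = s * r := by rw [hs]; field_simp
  have hd2 : d ^ 2 = s ^ 2 * r ^ 2 := by rw [hs2]; field_simp
  have h1 : |C₂ * e * (-(1 / r ^ 2) - 1 / 4 + d ^ 2 / (4 * r ^ 4))| ≤
      C₂ * e * (1 / r ^ 2 + 1 / 4 + d ^ 2 / (4 * r ^ 4)) := by
    rw [abs_mul, abs_of_nonneg (by positivity : 0 ≤ C₂ * e)]
    apply mul_le_mul_of_nonneg_left _ (by positivity)
    have : 0 ≤ 1 / r ^ 2 := by positivity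
    have : 0 ≤ d ^ 2 / (4 * r ^ 4) := by positivity
    rw [abs_le]; constructor <;> linarith
  have h2 : |(-(C₂ * e * d / (4 * r ^ 3)))| = C₂ * e * (s * r) / (4 * r ^ 3) := by
    rw [abs_neg, abs_div, abs_mul, abs_of_nonneg (by positivity : 0 ≤ C₂ * e), hdr,
      abs_of_nonneg (by positivity : 0 ≤ 4 * r ^ 3)]
  rw [h2]
  refine (add_le_add_left h1 _).trans (le_of_eq ?_)
  rw [hd2]
  field_simp
  ring

theorem grad_kernel_gradient_bound (C₁ C₂ : ℝ) (hC₁ : 0 < C₁) (hC₂ : 0 < C₂) :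
    ∃ θ₀ : ℝ, 0 < θ₀ ∧ θ₀ < 1/4 ∧ ∀ θt : ℝ, 0 < θt → θt ≤ θ₀ →
      ∃ C > (0:ℝ), ∃ ϱ > (0:ℝ), ∀ ξ ξ' : EuclideanSpace ℝ (Fin 3), ξ ≠ ξ' →
        (‖fderiv ℝ (fun η => gradK1 C₁ η ξ') ξ‖ +
            ‖fderiv ℝ (fun η => gradK2 C₂ η ξ') ξ‖) *
          Real.exp (θt * ‖ξ‖ ^ 2 - θt * ‖ξ'‖ ^ 2) ≤
        C * (1 + ‖ξ‖ ^ 2) * Real.exp (-ϱ * ‖ξ - ξ'‖ ^ 2) / ‖ξ - ξ'‖ ^ 2 := by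
  refine ⟨1 / 8, by norm_num, by norm_num, fun θ hθ0 hθ => ?_⟩
  refine ⟨4096 * C₁ + 32 * C₂, by positivity, 1 / 32, by norm_num, fun ξ ξ' h => ?_⟩
  obtain ⟨r, hr⟩ : ∃ r, r = ‖ξ - ξ'‖ := ⟨_, rfl⟩
  obtain ⟨s, hs⟩ : ∃ s, s = |‖ξ‖ ^ 2 - ‖ξ'‖ ^ 2| / r := ⟨_, rfl⟩
  have hrp : 0 < r := by rw [hr]; exact norm_pos_iff.mpr (sub_ne_zero.mpr h)
  have hsp : 0 ≤ s := by rw [hs]; positivity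
  have k1 := aux_k1 C₁ hC₁ ξ ξ' h
  have k2 := aux_k2 C₂ hC₂ ξ ξ' h r s hr hs
  have htri : r ≤ ‖ξ‖ + ‖ξ'‖ := hr ▸ norm_sub_le ξ ξ'
  have hdr : |‖ξ‖ ^ 2 - ‖ξ'‖ ^ 2| = s * r := by rw [hs]; field_simp
  rw [← hr] at k1 ⊢
  generalize ‖fderiv ℝ (fun η => gradK1 C₁ η ξ') ξ‖ = K1 at *
  generalize ‖fderiv ℝ (fun η => gradK2 C₂ η ξ') ξ‖ = K2 at *
  have ha : 0 ≤ ‖ξ‖ := norm_nonneg _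
  have hb : 0 ≤ ‖ξ'‖ := norm_nonneg _
  generalize ‖ξ‖ = a at *
  generalize ‖ξ'‖ = b at *
  have b1 : K1 * Real.exp (θ * a ^ 2 - θ * b ^ 2) ≤
      4096 * C₁ * (1 + a ^ 2) * Real.exp (-(1 / 32) * r ^ 2) / r ^ 2 := by
    have e1 : Real.exp (-(a ^ 2 + b ^ 2) / 4) * Real.exp (θ * a ^ 2 - θ * b ^ 2) ≤
        Real.exp (-r ^ 2 / 32) * Real.exp (-r ^ 2 / 32) := by
      rw [← Real.exp_add, ← Real.exp_add]
      apply Real.exp_le_exp.mpr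
      have : r ^ 2 ≤ 2 * (a ^ 2 + b ^ 2) := by nlinarith [sq_nonneg (a - b)]
      nlinarith [mul_nonneg (sub_nonneg.mpr hθ) (sq_nonneg a), mul_nonneg hθ0.le (sq_nonneg b)]
    have e2 : r ^ 2 * (1 + r ^ 2) * Real.exp (-r ^ 2 / 32) ≤ 4096 := by
      have h1 : r ^ 2 / 64 + 1 ≤ Real.exp (r ^ 2 / 64) := Real.add_one_le_exp _
      have h2 : r ^ 2 * (1 + r ^ 2) ≤ 4096 * (r ^ 2 / 64 + 1) ^ 2 := by
        nlinarith [sq_nonneg r]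
      have h3 : (r ^ 2 / 64 + 1) ^ 2 ≤ Real.exp (r ^ 2 / 64) ^ 2 := by gcongr
      have h4 : Real.exp (r ^ 2 / 64) ^ 2 * Real.exp (-r ^ 2 / 32) = 1 := by
        rw [sq, ← Real.exp_add, ← Real.exp_add, ← Real.exp_zero]; congr 1; ring
      calc _ ≤ (4096 * Real.exp (r ^ 2 / 64) ^ 2) * Real.exp (-r ^ 2 / 32) :=
            mul_le_mul_of_nonneg_right (by linarith) (Real.exp_pos _).le
        _ = 4096 := by rw [mul_assoc, h4, mul_one]
    have e3 : 1 + r * a / 2 ≤ (1 + a ^ 2) * (1 + r ^ 2) := by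
      nlinarith [sq_nonneg (r - a), mul_nonneg (sq_nonneg a) (sq_nonneg r), sq_nonneg r, sq_nonneg a]
    have e4 : Real.exp (-(1 / 32) * r ^ 2) = Real.exp (-r ^ 2 / 32) := by congr 1; ring
    rw [e4, le_div_iff₀ (by positivity)]
    calc _ ≤ C₁ * (1 + r * a / 2) * Real.exp (-(a ^ 2 + b ^ 2) / 4) *
            Real.exp (θ * a ^ 2 - θ * b ^ 2) * r ^ 2 := by gcongr
      _ = C₁ * (1 + r * a / 2) * (Real.exp (-(a ^ 2 + b ^ 2) / 4) *
            Real.exp (θ * a ^ 2 - θ * b ^ 2)) * r ^ 2 := by ring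
      _ ≤ C₁ * ((1 + a ^ 2) * (1 + r ^ 2)) * (Real.exp (-r ^ 2 / 32) * Real.exp (-r ^ 2 / 32)) *
            r ^ 2 := by gcongr
      _ = C₁ * (1 + a ^ 2) * Real.exp (-r ^ 2 / 32) *
            (r ^ 2 * (1 + r ^ 2) * Real.exp (-r ^ 2 / 32)) := by ring
      _ ≤ C₁ * (1 + a ^ 2) * Real.exp (-r ^ 2 / 32) * 4096 := by gcongr
      _ = _ := by ring
  have b2 : K2 * Real.exp (θ * a ^ 2 - θ * b ^ 2) ≤
      32 * C₂ * (1 + a ^ 2) * Real.exp (-(1 / 32) * r ^ 2) / r ^ 2 := by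
    have e1 : Real.exp (-r ^ 2 / 8 - s ^ 2 / 8) * Real.exp (θ * a ^ 2 - θ * b ^ 2) ≤
        Real.exp (-(r ^ 2 + s ^ 2) / 32) * Real.exp (-(1 / 32) * r ^ 2) := by
      rw [← Real.exp_add, ← Real.exp_add]
      apply Real.exp_le_exp.mpr
      have h1 : a ^ 2 - b ^ 2 ≤ s * r := hdr ▸ le_abs_self _
      have h2 := mul_le_mul_of_nonneg_left h1 hθ0.le
      have h3 := mul_le_mul_of_nonneg_right hθ (mul_nonneg hsp hrp.le)
      nlinarith [sq_nonneg (r - s), sq_nonneg s]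
    have e2 : (1 + r ^ 2 + s ^ 2) * Real.exp (-(r ^ 2 + s ^ 2) / 32) ≤ 32 := by
      have h1 := Real.add_one_le_exp ((r ^ 2 + s ^ 2) / 32)
      have h4 : Real.exp ((r ^ 2 + s ^ 2) / 32) * Real.exp (-(r ^ 2 + s ^ 2) / 32) = 1 := by
        rw [← Real.exp_add, ← Real.exp_zero]; congr 1; ring
      calc _ ≤ (32 * Real.exp ((r ^ 2 + s ^ 2) / 32)) * Real.exp (-(r ^ 2 + s ^ 2) / 32) := by
            gcongr; linarith
        _ = 32 := by rw [mul_assoc, h4, mul_one]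
    have e3 : 1 + r ^ 2 / 4 + s * a / 2 + s ^ 2 / 4 ≤ (1 + a ^ 2) * (1 + r ^ 2 + s ^ 2) := by
      nlinarith [sq_nonneg (s - a), mul_nonneg (sq_nonneg a) (sq_nonneg r),
        mul_nonneg (sq_nonneg a) (sq_nonneg s), sq_nonneg r, sq_nonneg a, sq_nonneg s]
    calc _ ≤ C₂ * (1 + r ^ 2 / 4 + s * a / 2 + s ^ 2 / 4) * Real.exp (-r ^ 2 / 8 - s ^ 2 / 8) /
            r ^ 2 * Real.exp (θ * a ^ 2 - θ * b ^ 2) := by gcongr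
      _ = C₂ * (1 + r ^ 2 / 4 + s * a / 2 + s ^ 2 / 4) * (Real.exp (-r ^ 2 / 8 - s ^ 2 / 8) *
            Real.exp (θ * a ^ 2 - θ * b ^ 2)) / r ^ 2 := by ring
      _ ≤ C₂ * ((1 + a ^ 2) * (1 + r ^ 2 + s ^ 2)) * (Real.exp (-(r ^ 2 + s ^ 2) / 32) *
            Real.exp (-(1 / 32) * r ^ 2)) / r ^ 2 := by gcongr
      _ = C₂ * (1 + a ^ 2) * Real.exp (-(1 / 32) * r ^ 2) *
            ((1 + r ^ 2 + s ^ 2) * Real.exp (-(r ^ 2 + s ^ 2) / 32)) / r ^ 2 := by ring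
      _ ≤ C₂ * (1 + a ^ 2) * Real.exp (-(1 / 32) * r ^ 2) * 32 / r ^ 2 := by gcongr
      _ = _ := by ring
  rw [add_mul]
  refine (add_le_add b1 b2).trans (le_of_eq ?_)
  ring
end
end

section
/- Let ν : ℝ³ → ℝ be continuous with ν(ξ) ≥ ν₀(1+|ξ|) for all ξ, where ν₀ > 0, and let u, τ ∈ ℝ with |u| ≤ 1 and |τ| ≤ ν₀/2. Suppose φ ∈ L^∞(ℝ³) satisfies, for every ξ ∈ ℝ³, φ(ξ) = (ν(ξ) − τ(ξ₁+u))⁻¹ · ∫_{ℝ³} (k₁(ξ,ξ') + k₂(ξ,ξ')) φ(ξ') dξ'. Then φ is continuous on ℝ³. -/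
open MeasureTheory

noncomputable section

open Filter Topology in
lemma continuous_integral_kernel_aux
    (K : EuclideanSpace ℝ (Fin 3) → EuclideanSpace ℝ (Fin 3) → ℝ)
    (g : EuclideanSpace ℝ (Fin 3) → ℝ) (hg : Integrable g)
    (hK0 : ∀ x y, 0 ≤ K x y) (hKm : ∀ x, Measurable (K x))
    (hKg : ∀ x z, K x (x - z) ≤ g z)
    (hKc : ∀ z, Continuous (fun x => K x (x - z)))
    (hKc' : ∀ x y, x ≠ y → ContinuousAt (fun x => K x y) x)
    (φ : EuclideanSpace ℝ (Fin 3) → ℝ) (hφmeas : Measurable φ)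
    (B : ℝ) (hφbdd : ∀ ξ, |φ ξ| ≤ B) :
    Continuous (fun x => ∫ y, K x y * φ y) := by
  have hKmz : ∀ x, Measurable (fun z => K x (x - z)) := fun x =>
    (hKm x).comp (measurable_const.sub measurable_id)
  have hint' : ∀ x, Integrable (fun z => K x (x - z)) := fun x =>
    hg.mono' (hKmz x).aestronglyMeasurable
      (Eventually.of_forall fun z => by
        rw [Real.norm_of_nonneg (hK0 _ _)]; exact hKg x z)
  have hint : ∀ x, Integrable (K x) := fun x => by
    have := (hint' x).comp_sub_left x
    simpa using this
  have hG : Continuous (fun x => ∫ y, K x y) := by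
    have h1 : (fun x => ∫ y, K x y) = fun x => ∫ z, K x (x - z) := by
      funext x
      exact (integral_sub_left_eq_self (K x) volume x).symm
    rw [h1]
    refine continuous_of_dominated (bound := g) (fun x => (hKmz x).aestronglyMeasurable)
      (fun x => Eventually.of_forall fun z => ?_) hg (Eventually.of_forall hKc)
    rw [Real.norm_of_nonneg (hK0 _ _)]; exact hKg x z
  have hprod : ∀ x, Integrable (fun y => K x y * φ y) := fun x =>
    (hint x).mul_bdd (c := B) hφmeas.aestronglyMeasurable
      (Eventually.of_forall fun y => hφbdd y)
  have hmin : ∀ x x0, Integrable (fun y => min (K x y) (K x0 y)) := fun x x0 =>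
    (hint x).inf (hint x0)
  rw [continuous_iff_continuousAt]
  intro x0
  have hM : Tendsto (fun x => ∫ y, min (K x y) (K x0 y)) (𝓝 x0) (𝓝 (∫ y, K x0 y)) := by
    refine tendsto_integral_filter_of_dominated_convergence (K x0)
      (Eventually.of_forall fun x => (hmin x x0).aestronglyMeasurable)
      (Eventually.of_forall fun x => Eventually.of_forall fun y => ?_) (hint x0) ?_
    · rw [Real.norm_of_nonneg (le_min (hK0 _ _) (hK0 _ _))]
      exact min_le_right _ _
    · have : ∀ᵐ y : EuclideanSpace ℝ (Fin 3), y ≠ x0 := by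
        simp [ae_iff]
      filter_upwards [this] with y hy
      have h := (hKc' x0 y hy.symm).tendsto.min (tendsto_const_nhds (x := K x0 y))
      simpa using h
  have hB : Tendsto (fun x => B * ((∫ y, K x y) + (∫ y, K x0 y)
      - 2 * ∫ y, min (K x y) (K x0 y))) (𝓝 x0) (𝓝 0) := by
    have := (((hG.tendsto x0).add_const (∫ y, K x0 y)).sub (hM.const_mul 2)).const_mul B
    convert this using 2
    ring
  rw [ContinuousAt, tendsto_iff_norm_sub_tendsto_zero]
  refine squeeze_zero (fun _ => norm_nonneg _) (fun x => ?_) hB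
  rw [← integral_sub (hprod x) (hprod x0), ← integral_add (hint x) (hint x0),
    ← integral_const_mul, ← integral_sub (f := fun a => K x a + K x0 a) ((hint x).add (hint x0)) ((hmin x x0).const_mul 2),
    ← integral_const_mul]
  refine norm_integral_le_of_norm_le
    ((((hint x).add (hint x0)).sub ((hmin x x0).const_mul 2)).const_mul B)
    (Eventually.of_forall fun y => ?_)
  have h1 : K x y + K x0 y - 2 * min (K x y) (K x0 y) = |K x y - K x0 y| := by
    rcases le_total (K x y) (K x0 y) with h | h
    · rw [min_eq_left h, abs_of_nonpos (by linarith)]; ring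
    · rw [min_eq_right h, abs_of_nonneg (by linarith)]; ring
  simp only [h1]
  rw [← sub_mul, norm_mul, mul_comm]
  exact mul_le_mul_of_nonneg_right (hφbdd y) (abs_nonneg _)

lemma integrable_grad_bound (C₁ C₂ : ℝ) :
    Integrable (fun z : EuclideanSpace ℝ (Fin 3) =>
      (C₁ * ‖z‖ + C₂ * ‖z‖⁻¹) * Real.exp (-‖z‖ ^ 2 / 8)) := by
  have key := integrable_fun_norm_addHaar (volume : Measure (EuclideanSpace ℝ (Fin 3)))
    (f := fun r : ℝ => (C₁ * r + C₂ * r⁻¹) * Real.exp (-r ^ 2 / 8))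
  refine key.2 ?_
  have h3 := (integrableOn_rpow_mul_exp_neg_mul_sq (b := 1/8) (by norm_num) (s := 3)
    (by norm_num)).const_mul C₁
  have h1 := (integrableOn_rpow_mul_exp_neg_mul_sq (b := 1/8) (by norm_num) (s := 1)
    (by norm_num)).const_mul C₂
  refine IntegrableOn.congr_fun (h3.add h1) (fun r hr => ?_) measurableSet_Ioi
  have hr : (0:ℝ) < r := hr
  have e : -r ^ 2 / 8 = -(1/8) * r ^ 2 := by ring
  have e3 : r ^ (3:ℝ) = r ^ 3 := by exact_mod_cast Real.rpow_natCast r 3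
  simp only [Pi.add_apply, finrank_euclideanSpace, Fintype.card_fin, smul_eq_mul, e, e3,
    Real.rpow_one]
  field_simp
  norm_num
  ring

/-- a bounded measurable solution `φ` of the fixed-point equation
`φ(ξ) = (ν(ξ) − τ(ξ₁+u))⁻¹ ∫ k(ξ,ξ') φ(ξ') dξ'` is continuous on `ℝ³`. -/
theorem eigenfunction_continuous (C₁ C₂ : ℝ) (hC₁ : 0 < C₁) (hC₂ : 0 < C₂)
    (ν₀ : ℝ) (hν₀ : 0 < ν₀) (ν : EuclideanSpace ℝ (Fin 3) → ℝ)
    (hνcont : Continuous ν) (hνlb : ∀ ξ, ν₀ * (1 + ‖ξ‖) ≤ ν ξ)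
    (u τ : ℝ) (hu : |u| ≤ 1) (hτ : |τ| ≤ ν₀ / 2)
    (φ : EuclideanSpace ℝ (Fin 3) → ℝ) (hφmeas : Measurable φ)
    (B : ℝ) (hφbdd : ∀ ξ, |φ ξ| ≤ B)
    (hfix : ∀ ξ : EuclideanSpace ℝ (Fin 3),
      φ ξ = (ν ξ - τ * (ξ 0 + u))⁻¹ *
        ∫ ξ' : EuclideanSpace ℝ (Fin 3), (gradK1 C₁ ξ ξ' + gradK2 C₂ ξ ξ') * φ ξ') :
    Continuous φ := by
  have hnn1 : ∀ x y, 0 ≤ gradK1 C₁ x y := fun x y => by unfold gradK1; positivity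
  have hnn2 : ∀ x y, 0 ≤ gradK2 C₂ x y := fun x y => by unfold gradK2; positivity
  have hI : Continuous (fun x : EuclideanSpace ℝ (Fin 3) =>
      ∫ y, (gradK1 C₁ x y + gradK2 C₂ x y) * φ y) := by
    refine continuous_integral_kernel_aux (fun x y => gradK1 C₁ x y + gradK2 C₂ x y) _
      (integrable_grad_bound C₁ C₂) (fun x y => add_nonneg (hnn1 x y) (hnn2 x y))
      (fun x => ?_) (fun x z => ?_) (fun z => ?_) (fun x y hxy => ?_) φ hφmeas B hφbdd
    · unfold gradK1 gradK2
      fun_prop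
    · simp only [gradK1, gradK2, sub_sub_cancel]
      rw [add_mul]
      refine add_le_add ?_ ?_
      · refine mul_le_mul_of_nonneg_left (Real.exp_le_exp.2 ?_) (by positivity)
        have h : ‖z‖ ≤ ‖x‖ + ‖x - z‖ := by
          have := norm_sub_le x (x - z)
          rwa [sub_sub_cancel] at this
        nlinarith [sq_nonneg (‖x‖ - ‖x - z‖), norm_nonneg z, norm_nonneg x,
          norm_nonneg (x - z)]
      · refine mul_le_mul_of_nonneg_left (Real.exp_le_exp.2 ?_) (by positivity)
        have : 0 ≤ (‖x‖ ^ 2 - ‖x - z‖ ^ 2) ^ 2 / (8 * ‖z‖ ^ 2) := by positivity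
        linarith
    · simp only [gradK1, gradK2, sub_sub_cancel]
      fun_prop
    · have h : ‖x - y‖ ≠ 0 := norm_ne_zero_iff.2 (sub_ne_zero.2 hxy)
      have h8 : 8 * ‖x - y‖ ^ 2 ≠ 0 := by positivity
      unfold gradK1 gradK2
      fun_prop (disch := assumption)
  have hD : ∀ ξ : EuclideanSpace ℝ (Fin 3), ν ξ - τ * (ξ 0 + u) ≠ 0 := fun ξ => by
    have h0 : |ξ 0| ≤ ‖ξ‖ := PiLp.norm_apply_le ξ 0
    have h1 : |ξ 0 + u| ≤ ‖ξ‖ + 1 := (abs_add_le _ _).trans (add_le_add h0 hu)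
    have h2 : τ * (ξ 0 + u) ≤ ν₀ / 2 * (‖ξ‖ + 1) := by
      refine (le_abs_self _).trans ?_
      rw [abs_mul]
      exact mul_le_mul hτ h1 (abs_nonneg _) (by positivity)
    have h3 := hνlb ξ
    have h4 : 0 < ν₀ * (1 + ‖ξ‖) := by positivity
    exact ne_of_gt (by linarith)
  rw [funext hfix]
  exact (Continuous.inv₀ (by fun_prop) hD).mul hI
end
end

section
/- For every constant C > 0 there exists a constant C' > 0 such that for every η = (η₁,η₂,η₃) ∈ ℝ³ and every a > 0, ∫_{ℝ³} e^{−C|η−ξ'|²} / |η−ξ'| · (|ξ₁'|² + a²)^{−1/2} dξ' ≤ C' · [ 1 + ln(√(1+(2η₁/a)²) + 2|η₁|/a) + ln(√(1+a⁻²) + a⁻¹) ]. -/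
open MeasureTheory

/-- one-dimensional weight -/
lemma gsi_w_integrable (C : ℝ) (hC : 0 < C) :
    Integrable (fun t : ℝ => (Real.sqrt |t|)⁻¹ * Real.exp (-C * t ^ 2)) := by
  have h0 := integrableOn_rpow_mul_exp_neg_mul_sq hC (s := -(1/2)) (by norm_num)
  have h1 : Integrable ((Set.Ioi (0:ℝ)).indicator
      (fun x : ℝ => x ^ (-(1/2) : ℝ) * Real.exp (-C * x ^ 2))) :=
    h0.integrable_indicator measurableSet_Ioi
  refine (h1.add h1.comp_neg).congr (Filter.Eventually.of_forall fun t => ?_)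
  rcases lt_trichotomy t 0 with ht | ht | ht
  · have h2 : ¬ (0 < t) := by linarith
    have h3 : 0 < -t := by linarith
    simp [Set.indicator, h2, ht, abs_of_neg ht, Real.sqrt_eq_rpow, ← Real.rpow_neg h3.le]
  · subst ht; simp
  · have h2 : ¬ (t < 0) := by linarith
    simp [Set.indicator, h2, ht, abs_of_pos ht, Real.sqrt_eq_rpow, ← Real.rpow_neg ht.le]

lemma gsi_arsinh (a : ℝ) (ha : 0 < a) :
    ∫ s in (-1:ℝ)..1, (Real.sqrt (s ^ 2 + a ^ 2))⁻¹ = 2 * Real.arsinh a⁻¹ := by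
  have hpos : ∀ s : ℝ, 0 < s ^ 2 + a ^ 2 := fun s => by positivity
  have hc : Continuous (fun s : ℝ => (Real.sqrt (s ^ 2 + a ^ 2))⁻¹) :=
    Continuous.inv₀ (by fun_prop) (fun s => (Real.sqrt_pos.2 (hpos s)).ne')
  rw [intervalIntegral.integral_eq_sub_of_hasDerivAt (f := fun s => Real.arsinh (s / a))
    _ (hc.intervalIntegrable _ _)]
  · simp only [neg_div, one_div, Real.arsinh_neg]; ring
  · intro s _
    have := ((hasDerivAt_id s).div_const a).arsinh
    refine this.congr_deriv ?_
    have e : s ^ 2 + a ^ 2 = a ^ 2 * (1 + (s / a) ^ 2) := by field_simp; ring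
    rw [e, Real.sqrt_mul (by positivity), Real.sqrt_sq ha.le]
    simp [mul_comm]

lemma gsi_one_dim (C : ℝ) (hC : 0 < C) (b a : ℝ) (ha : 0 < a) :
    Integrable (fun s : ℝ => Real.exp (-C * (b - s) ^ 2) * (Real.sqrt (s ^ 2 + a ^ 2))⁻¹) ∧
    ∫ s : ℝ, Real.exp (-C * (b - s) ^ 2) * (Real.sqrt (s ^ 2 + a ^ 2))⁻¹ ≤
      Real.sqrt (Real.pi / C) + 2 * Real.arsinh a⁻¹ := by
  have hpos : ∀ s : ℝ, 0 < s ^ 2 + a ^ 2 := fun s => by positivity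
  have hc : Continuous (fun s : ℝ => (Real.sqrt (s ^ 2 + a ^ 2))⁻¹) :=
    Continuous.inv₀ (by fun_prop) (fun s => (Real.sqrt_pos.2 (hpos s)).ne')
  have hg : Integrable (fun s : ℝ => Real.exp (-C * (b - s) ^ 2)) :=
    (integrable_exp_neg_mul_sq hC).comp_sub_left b
  have hi : Integrable ((Set.Ioc (-1:ℝ) 1).indicator
      (fun s : ℝ => (Real.sqrt (s ^ 2 + a ^ 2))⁻¹)) :=
    IntegrableOn.integrable_indicator
      ((hc.integrableOn_Icc (a := -1) (b := 1)).mono_set Set.Ioc_subset_Icc_self) measurableSet_Ioc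
  have hle : ∀ s : ℝ, s ≠ -1 → Real.exp (-C * (b - s) ^ 2) * (Real.sqrt (s ^ 2 + a ^ 2))⁻¹ ≤
      Real.exp (-C * (b - s) ^ 2) + (Set.Ioc (-1:ℝ) 1).indicator
      (fun s : ℝ => (Real.sqrt (s ^ 2 + a ^ 2))⁻¹) s := by
    intro s _
    have hE : Real.exp (-C * (b - s) ^ 2) ≤ 1 :=
      Real.exp_le_one_iff.2 (by nlinarith [mul_nonneg hC.le (sq_nonneg (b - s))])
    have hE0 := Real.exp_pos (-C * (b - s) ^ 2)
    have hi0 : 0 ≤ (Real.sqrt (s ^ 2 + a ^ 2))⁻¹ := by positivity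
    by_cases hs : s ∈ Set.Ioc (-1:ℝ) 1
    · rw [Set.indicator_of_mem hs]
      nlinarith
    · rw [Set.indicator_of_notMem hs]
      have h1 : 1 ≤ s ^ 2 := by
        by_contra hcon
        push Not at hcon
        have := abs_lt_of_sq_lt_sq (by simpa using hcon : s ^ 2 < 1 ^ 2) zero_le_one
        exact hs ⟨by linarith [(abs_lt.1 this).1], by linarith [(abs_lt.1 this).2]⟩
      have h2 : (Real.sqrt (s ^ 2 + a ^ 2))⁻¹ ≤ 1 :=
        inv_le_one_of_one_le₀ (Real.one_le_sqrt.2 (by nlinarith [sq_nonneg a]))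
      nlinarith
  have hae : ∀ᵐ s : ℝ, Real.exp (-C * (b - s) ^ 2) * (Real.sqrt (s ^ 2 + a ^ 2))⁻¹ ≤
      Real.exp (-C * (b - s) ^ 2) + (Set.Ioc (-1:ℝ) 1).indicator
      (fun s : ℝ => (Real.sqrt (s ^ 2 + a ^ 2))⁻¹) s := by
    filter_upwards [Measure.ae_ne volume (-1:ℝ)] with s hs using hle s hs
  have hI : Integrable (fun s : ℝ =>
      Real.exp (-C * (b - s) ^ 2) * (Real.sqrt (s ^ 2 + a ^ 2))⁻¹) := by
    refine (hg.add hi).mono' (Continuous.aestronglyMeasurable ?_) ?_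
    · exact Continuous.mul (by fun_prop) hc
    · filter_upwards [hae] with s hs
      rw [Real.norm_of_nonneg (by positivity)]
      exact hs
  refine ⟨hI, (integral_mono_ae hI (hg.add hi) hae).trans (le_of_eq ?_)⟩
  simp only [Pi.add_apply]
  rw [integral_add hg hi, integral_indicator measurableSet_Ioc,
    ← intervalIntegral.integral_of_le (by norm_num), gsi_arsinh a ha,
    integral_sub_left_eq_self (fun s : ℝ => Real.exp (-C * s ^ 2)) volume b, integral_gaussian]

lemma gsi_pointwise (C x y z n k : ℝ) (hn : 0 ≤ n) (hn2 : n ^ 2 = x ^ 2 + y ^ 2 + z ^ 2)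
    (hy : y ≠ 0) (hz : z ≠ 0) (hk : 0 ≤ k) :
    Real.exp (-C * n ^ 2) / n * k ≤ (Real.exp (-C * x ^ 2) * k) *
      ((Real.sqrt |y|)⁻¹ * Real.exp (-C * y ^ 2)) *
      ((Real.sqrt |z|)⁻¹ * Real.exp (-C * z ^ 2)) := by
  have hy' := abs_pos.2 hy
  have hz' := abs_pos.2 hz
  have h1 : Real.sqrt |y| * Real.sqrt |z| ≤ n := by
    rw [← Real.sqrt_mul hy'.le]
    refine Real.sqrt_le_iff.2 ⟨hn, ?_⟩
    rw [hn2, ← sq_abs y, ← sq_abs z]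
    nlinarith [sq_nonneg (|y| - |z|), sq_nonneg x, sq_nonneg (|y|), sq_nonneg (|z|)]
  have h2 : n⁻¹ ≤ (Real.sqrt |y|)⁻¹ * (Real.sqrt |z|)⁻¹ := by
    rw [← mul_inv]
    exact inv_anti₀ (mul_pos (Real.sqrt_pos.2 hy') (Real.sqrt_pos.2 hz')) h1
  have h3 : Real.exp (-C * n ^ 2) =
      Real.exp (-C * x ^ 2) * Real.exp (-C * y ^ 2) * Real.exp (-C * z ^ 2) := by
    rw [hn2, ← Real.exp_add, ← Real.exp_add]; ring_nf
  calc Real.exp (-C * n ^ 2) / n * k = (Real.exp (-C * n ^ 2) * k) * n⁻¹ := by ring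
    _ ≤ (Real.exp (-C * n ^ 2) * k) * ((Real.sqrt |y|)⁻¹ * (Real.sqrt |z|)⁻¹) := by gcongr
    _ = _ := by rw [h3]; ring

lemma gsi_bound (C : ℝ) (hC : 0 < C) (η : EuclideanSpace ℝ (Fin 3)) (a : ℝ) (ha : 0 < a) :
    (∫ ξ' : EuclideanSpace ℝ (Fin 3),
          Real.exp (-C * ‖η - ξ'‖ ^ 2) / ‖η - ξ'‖ *
            (Real.sqrt ((ξ' 0) ^ 2 + a ^ 2))⁻¹) ≤
      (Real.sqrt (Real.pi / C) + 2 * Real.arsinh a⁻¹) *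
        (∫ t : ℝ, (Real.sqrt |t|)⁻¹ * Real.exp (-C * t ^ 2)) ^ 2 := by
  obtain ⟨hp, hple⟩ := gsi_one_dim C hC (η 0) a ha
  have hw := gsi_w_integrable C hC
  set p : ℝ → ℝ := fun s => Real.exp (-C * (η 0 - s) ^ 2) * (Real.sqrt (s ^ 2 + a ^ 2))⁻¹ with hpd
  set w : ℝ → ℝ := fun t => (Real.sqrt |t|)⁻¹ * Real.exp (-C * t ^ 2) with hwd
  let F : Fin 3 → ℝ → ℝ := ![p, fun s => w (η 1 - s), fun s => w (η 2 - s)]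
  have hF : ∀ i, Integrable (F i) := by
    intro i
    fin_cases i
    · exact hp
    · exact hw.comp_sub_left (η 1)
    · exact hw.comp_sub_left (η 2)
  have hFi : Integrable (fun x : Fin 3 → ℝ => ∏ i, F i (x i)) :=
    Integrable.fintype_prod (f := F) hF
  have hFint : ∫ x : Fin 3 → ℝ, ∏ i, F i (x i) = (∫ s, p s) * (∫ t, w t) ^ 2 := by
    rw [integral_fintype_prod_volume_eq_prod F, Fin.prod_univ_three]
    simp only [F, Matrix.cons_val_zero, Matrix.cons_val_one, Matrix.cons_val]
    rw [integral_sub_left_eq_self w volume, integral_sub_left_eq_self w volume]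
    ring
  have hmp := PiLp.volume_preserving_toLp (Fin 3)
  have hemb : MeasurableEmbedding (@WithLp.toLp 2 (Fin 3 → ℝ)) :=
    (MeasurableEquiv.toLp 2 (Fin 3 → ℝ)).measurableEmbedding
  rw [← hmp.integral_comp hemb]
  calc _ ≤ ∫ x : Fin 3 → ℝ, ∏ i, F i (x i) := by
        refine integral_mono_of_nonneg (Filter.Eventually.of_forall fun x => ?_) hFi ?_
        · simp only [Pi.zero_apply]; positivity
        · have e1 : ∀ᵐ x : Fin 3 → ℝ, x 1 ≠ η 1 := Measure.ae_eval_ne (fun _ : Fin 3 => (volume : Measure ℝ)) 1 (η 1)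
          have e2 : ∀ᵐ x : Fin 3 → ℝ, x 2 ≠ η 2 := Measure.ae_eval_ne (fun _ : Fin 3 => (volume : Measure ℝ)) 2 (η 2)
          filter_upwards [e1, e2] with x h1 h2
          have hn2 : ‖η - WithLp.toLp 2 x‖ ^ 2 =
              (η 0 - x 0) ^ 2 + (η 1 - x 1) ^ 2 + (η 2 - x 2) ^ 2 := by
            rw [EuclideanSpace.norm_sq_eq, Fin.sum_univ_three]
            simp
          rw [Fin.prod_univ_three]
          exact gsi_pointwise C _ _ _ _ _ (norm_nonneg _) hn2
            (sub_ne_zero.2 h1.symm) (sub_ne_zero.2 h2.symm) (by positivity)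
    _ = (∫ s, p s) * (∫ t, w t) ^ 2 := hFint
    _ ≤ _ := by gcongr

/-- for every `C > 0` there is `C' > 0` such that for all
`η ∈ ℝ³` and `a > 0`,
`∫ e^{−C|η−ξ'|²}/|η−ξ'| · (|ξ₁'|²+a²)^{−1/2} dξ'
  ≤ C'·[1 + ln(√(1+(2η₁/a)²)+2|η₁|/a) + ln(√(1+a⁻²)+a⁻¹)]`. -/
theorem gaussian_singular_integral_log_bound :
    ∀ C > (0:ℝ), ∃ C' > (0:ℝ), ∀ η : EuclideanSpace ℝ (Fin 3), ∀ a : ℝ, 0 < a →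
      (∫ ξ' : EuclideanSpace ℝ (Fin 3),
          Real.exp (-C * ‖η - ξ'‖ ^ 2) / ‖η - ξ'‖ *
            (Real.sqrt ((ξ' 0) ^ 2 + a ^ 2))⁻¹) ≤
        C' * (1 + Real.log (Real.sqrt (1 + (2 * η 0 / a) ^ 2) + 2 * |η 0| / a)
            + Real.log (Real.sqrt (1 + (a⁻¹) ^ 2) + a⁻¹)) := by
  intro C hC
  set K : ℝ := (∫ t : ℝ, (Real.sqrt |t|)⁻¹ * Real.exp (-C * t ^ 2)) ^ 2 with hK
  have hK0 : 0 ≤ K := sq_nonneg _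
  have hS : 0 ≤ Real.sqrt (Real.pi / C) := Real.sqrt_nonneg _
  refine ⟨(Real.sqrt (Real.pi / C) + 2) * K + 1, by positivity, fun η a ha => ?_⟩
  refine (gsi_bound C hC η a ha).trans ?_
  have hL : Real.log (Real.sqrt (1 + (a⁻¹) ^ 2) + a⁻¹) = Real.arsinh a⁻¹ := by
    rw [add_comm]; rfl
  have hA : 0 ≤ Real.arsinh a⁻¹ := Real.arsinh_nonneg_iff.2 (by positivity)
  have hB : 0 ≤ Real.log (Real.sqrt (1 + (2 * η 0 / a) ^ 2) + 2 * |η 0| / a) := by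
    apply Real.log_nonneg
    have h1 : 1 ≤ Real.sqrt (1 + (2 * η 0 / a) ^ 2) :=
      Real.one_le_sqrt.2 (by nlinarith [sq_nonneg (2 * η 0 / a)])
    have h2 : 0 ≤ 2 * |η 0| / a := by positivity
    linarith
  rw [hL, ← hK]
  set A := Real.arsinh a⁻¹
  set B := Real.log (Real.sqrt (1 + (2 * η 0 / a) ^ 2) + 2 * |η 0| / a)
  set S := Real.sqrt (Real.pi / C)
  have : ((S + 2) * K + 1) * (1 + B + A) - (S + 2 * A) * K =
    (S + 2) * K * B + S * K * A + 2 * K + 1 + B + A := by ring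
  have h5 : 0 ≤ (S + 2) * K * B + S * K * A + 2 * K + 1 + B + A := by positivity
  linarith
end

section
/- For every constant C > 0 there exist a constant C' > 0 and a time t₀ ≥ 1 such that the following holds. For all t ≥ t₀, all T with 1 < T ≤ t, all x ≥ 0 and all ξ = (ξ₁,ξ₂,ξ₃) ∈ ℝ³ with x − T(ξ₁+u) ≥ 0, ∫_{t−T}^{t} e^{−ν(ξ)(t−s)/2} · ( ∫_{ℝ³} e^{−C|ξ−ξ'|²}/|ξ−ξ'| · α(x−(t−s)(ξ₁+u), ξ')⁻¹ dξ' ) ds ≤ C' · t / α(x,ξ). -/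
open MeasureTheory

noncomputable section

lemma nln_sqrt_mul_le {a b d : ℝ} (ha : 0 ≤ a) (hd : 0 ≤ d)
    (h : a ^ 2 + b ^ 2 ≤ d ^ 2) : √a * √b ≤ d := by
  rw [← Real.sqrt_mul ha]
  apply Real.sqrt_le_iff.2 ⟨hd, ?_⟩
  nlinarith [sq_nonneg (a - b), sq_nonneg (a + b)]

lemma nln_sqrt_inv_eq {a : ℝ} (ha : 0 ≤ a) : (√a)⁻¹ = a ^ (-(1/2) : ℝ) := by
  rw [Real.rpow_neg ha, Real.sqrt_eq_rpow]

lemma nln_ii (T : ℝ) (hT : 0 ≤ T) : IntervalIntegrable (fun a : ℝ => (√a)⁻¹) volume 0 T := by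
  have h := intervalIntegral.intervalIntegrable_rpow' (a := 0) (b := T) (r := -(1/2)) (by norm_num)
  refine h.congr ?_
  intro a ha
  rw [Set.uIoc_of_le hT] at ha
  exact (nln_sqrt_inv_eq ha.1.le).symm

lemma nln_int (T : ℝ) (hT : 0 ≤ T) : ∫ a in (0:ℝ)..T, (√a)⁻¹ = 2 * √T := by
  have h := integral_rpow (a := 0) (b := T) (r := -(1/2)) (Or.inl (by norm_num))
  have e : ∫ a in (0:ℝ)..T, (√a)⁻¹ = ∫ a in (0:ℝ)..T, a ^ (-(1/2) : ℝ) := by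
    apply intervalIntegral.integral_congr
    intro a ha
    rw [Set.uIcc_of_le hT] at ha
    exact nln_sqrt_inv_eq ha.1
  rw [e, h, Real.sqrt_eq_rpow]
  norm_num
  ring

/-- truncated singular kernel, one side -/
def nlnK0 (a : ℝ) : ℝ := (Set.Ioc (0:ℝ) 1).indicator (fun a => (√a)⁻¹) a

/-- truncated singular kernel -/
def nlnK (a : ℝ) : ℝ := nlnK0 a + nlnK0 (-a)

lemma nlnK0_nonneg (a : ℝ) : 0 ≤ nlnK0 a :=
  Set.indicator_nonneg (fun _ _ => by positivity) _

lemma nlnK_nonneg (a : ℝ) : 0 ≤ nlnK a := add_nonneg (nlnK0_nonneg _) (nlnK0_nonneg _)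

lemma nlnK0_integrable : Integrable nlnK0 := by
  have h := (nln_ii 1 zero_le_one)
  rw [intervalIntegrable_iff_integrableOn_Ioc_of_le zero_le_one] at h
  exact (integrable_indicator_iff measurableSet_Ioc).2 h

lemma nlnK_integrable : Integrable nlnK := nlnK0_integrable.add nlnK0_integrable.comp_neg

lemma nlnK0_ge {a : ℝ} (ha : 0 < a) : (√a)⁻¹ ≤ 1 + nlnK0 a := by
  by_cases h : a ≤ 1
  · have : nlnK0 a = (√a)⁻¹ := Set.indicator_of_mem (show a ∈ Set.Ioc (0:ℝ) 1 from ⟨ha, h⟩) _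
    linarith
  · have h1 : 1 ≤ √a := Real.one_le_sqrt.2 (by linarith)
    have := inv_le_one_of_one_le₀ h1
    linarith [nlnK0_nonneg a]

lemma nlnK_ge {a : ℝ} (ha : a ≠ 0) : (√|a|)⁻¹ ≤ 1 + nlnK a := by
  unfold nlnK
  rcases lt_or_gt_of_ne ha with h | h
  · rw [abs_of_neg h]
    linarith [nlnK0_ge (neg_pos.2 h), nlnK0_nonneg a]
  · rw [abs_of_pos h]
    linarith [nlnK0_ge h, nlnK0_nonneg (-a)]

lemma nln_int_prod (f : Fin 3 → ℝ → ℝ) :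
    ∫ ξ : EuclideanSpace ℝ (Fin 3), f 0 (ξ 0) * f 1 (ξ 1) * f 2 (ξ 2)
      = (∫ a, f 0 a) * (∫ a, f 1 a) * (∫ a, f 2 a) := by
  have h := integral_fintype_prod_volume_eq_prod (𝕜 := ℝ) f
  rw [Fin.prod_univ_three] at h
  rw [← h, ← (PiLp.volume_preserving_ofLp (Fin 3)).integral_comp
    (MeasurableEquiv.toLp 2 (Fin 3 → ℝ)).symm.measurableEmbedding]
  simp only [Fin.prod_univ_three]

lemma nln_integrable_prod (f : Fin 3 → ℝ → ℝ) (hf : ∀ i, Integrable (f i)) :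
    Integrable (fun ξ : EuclideanSpace ℝ (Fin 3) => f 0 (ξ 0) * f 1 (ξ 1) * f 2 (ξ 2)) := by
  have h := Integrable.fintype_prod (𝕜 := ℝ) hf
  have h2 := ((PiLp.volume_preserving_ofLp (Fin 3)).integrable_comp_emb
    (MeasurableEquiv.toLp 2 (Fin 3 → ℝ)).symm.measurableEmbedding).2 h
  simpa only [Function.comp_def, Fin.prod_univ_three] using h2

lemma nln_ae_ne (i : Fin 3) (a : ℝ) : ∀ᵐ ξ : EuclideanSpace ℝ (Fin 3), ξ i ≠ a := by
  have h := Measure.ae_eval_ne (fun _ : Fin 3 => (volume : Measure ℝ)) i a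
  exact (PiLp.volume_preserving_ofLp (Fin 3)).quasiMeasurePreserving.ae h

lemma nln_norm_sq (η : EuclideanSpace ℝ (Fin 3)) : ‖η‖ ^ 2 = η 0 ^ 2 + η 1 ^ 2 + η 2 ^ 2 := by
  rw [EuclideanSpace.norm_sq_eq, Fin.sum_univ_three]
  simp [sq_abs]

/-- inner integral bound -/
lemma nln_inner_s12 (C : ℝ) (hC : 0 < C) (u κ : ℝ) (hκ : 0 < κ) (χ : ℝ → ℝ)
    (hχ : ∀ s, 0 < s → min s (1/2) ≤ χ s) :
    ∃ A B : ℝ, 0 ≤ A ∧ 0 ≤ B ∧ ∀ y > 0, ∀ ξ : EuclideanSpace ℝ (Fin 3),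
      ∫ ξ' : EuclideanSpace ℝ (Fin 3), Real.exp (-C * ‖ξ - ξ'‖ ^ 2) / ‖ξ - ξ'‖ *
        (χ (√((ξ' 0 + u) ^ 2 + κ ^ 2 * y ^ 2)))⁻¹ ≤ A + B * (√y)⁻¹ := by
  set E : ℝ → ℝ := fun a => Real.exp (-C * a ^ 2) with hE
  have hEi : Integrable E := integrable_exp_neg_mul_sq hC
  have hE0 : ∀ a, 0 ≤ E a := fun a => (Real.exp_pos _).le
  have hE1 : ∀ a, E a ≤ 1 := fun a => Real.exp_le_one_iff.2 (by nlinarith [sq_nonneg a])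
  set IE := ∫ a, E a
  set IK := ∫ a, nlnK a
  have hIE : 0 ≤ IE := integral_nonneg hE0
  have hIK : 0 ≤ IK := integral_nonneg nlnK_nonneg
  refine ⟨2 * IE * (IE + IK) ^ 2, (IE + IK) ^ 3 * (√κ)⁻¹, by positivity, by positivity, ?_⟩
  intro y hy ξ
  set m : ℝ := (√κ)⁻¹ * (√y)⁻¹ with hm
  have hm0 : 0 ≤ m := by positivity
  let f : Fin 3 → ℝ → ℝ := ![fun a => (2 + m) * E (ξ 0 - a) + m * nlnK (a + u),
    fun a => E (ξ 1 - a) + nlnK (ξ 1 - a), fun a => E (ξ 2 - a) + nlnK (ξ 2 - a)]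
  have hf : ∀ i, Integrable (f i) := by
    intro i
    fin_cases i
    · exact ((hEi.comp_sub_left (ξ 0)).const_mul _).add ((nlnK_integrable.comp_add_right u).const_mul _)
    · exact (hEi.comp_sub_left (ξ 1)).add (nlnK_integrable.comp_sub_left (ξ 1))
    · exact (hEi.comp_sub_left (ξ 2)).add (nlnK_integrable.comp_sub_left (ξ 2))
  have i0 : ∫ a, f 0 a = (2 + m) * IE + m * IK := by
    change ∫ a, ((2 + m) * E (ξ 0 - a) + m * nlnK (a + u)) = _
    rw [integral_add ((hEi.comp_sub_left (ξ 0)).const_mul _)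
      ((nlnK_integrable.comp_add_right u).const_mul _), integral_const_mul, integral_const_mul,
      integral_sub_left_eq_self E volume, integral_add_right_eq_self nlnK]
  have i1 : ∫ a, f 1 a = IE + IK := by
    change ∫ a, (E (ξ 1 - a) + nlnK (ξ 1 - a)) = _
    rw [integral_add (hEi.comp_sub_left (ξ 1)) (nlnK_integrable.comp_sub_left (ξ 1)),
      integral_sub_left_eq_self E volume, integral_sub_left_eq_self nlnK volume]
  have i2 : ∫ a, f 2 a = IE + IK := by
    change ∫ a, (E (ξ 2 - a) + nlnK (ξ 2 - a)) = _
    rw [integral_add (hEi.comp_sub_left (ξ 2)) (nlnK_integrable.comp_sub_left (ξ 2)),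
      integral_sub_left_eq_self E volume, integral_sub_left_eq_self nlnK volume]
  have hα : ∀ v : ℝ, 0 < √(v ^ 2 + κ ^ 2 * y ^ 2) := fun v => by positivity
  have hχ0 : ∀ v : ℝ, 0 < χ (√(v ^ 2 + κ ^ 2 * y ^ 2)) := fun v =>
    lt_of_lt_of_le (lt_min (hα v) (by norm_num)) (hχ _ (hα v))
  calc _ ≤ ∫ ξ' : EuclideanSpace ℝ (Fin 3), f 0 (ξ' 0) * f 1 (ξ' 1) * f 2 (ξ' 2) := by
        apply integral_mono_of_nonneg
        · refine Filter.Eventually.of_forall fun ξ' => ?_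
          have := hχ0 (ξ' 0 + u)
          dsimp
          positivity
        · exact nln_integrable_prod f hf
        · filter_upwards [nln_ae_ne 0 (-u), nln_ae_ne 1 (ξ 1), nln_ae_ne 2 (ξ 2)] with ξ' h0 h1 h2
          have hv : ξ' 0 + u ≠ 0 := fun h => h0 (by linarith)
          have h1' : ξ 1 - ξ' 1 ≠ 0 := fun h => h1 (by linarith)
          have h2' : ξ 2 - ξ' 2 ≠ 0 := fun h => h2 (by linarith)
          have hn := nln_norm_sq (ξ - ξ')
          simp only [PiLp.sub_apply] at hn
          -- reciprocal norm
          have hnorm : (‖ξ - ξ'‖)⁻¹ ≤ (√|ξ 1 - ξ' 1|)⁻¹ * (√|ξ 2 - ξ' 2|)⁻¹ := by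
            rw [← mul_inv]
            apply inv_anti₀ (by positivity)
            apply nln_sqrt_mul_le (abs_nonneg _) (norm_nonneg _)
            rw [sq_abs, sq_abs, hn]
            nlinarith [sq_nonneg (ξ 0 - ξ' 0)]
          have hexp : Real.exp (-C * ‖ξ - ξ'‖ ^ 2) =
              E (ξ 0 - ξ' 0) * E (ξ 1 - ξ' 1) * E (ξ 2 - ξ' 2) := by
            simp only [hE, ← Real.exp_add]
            rw [hn]; congr 1; ring
          have hinv : (χ (√((ξ' 0 + u) ^ 2 + κ ^ 2 * y ^ 2)))⁻¹ ≤ 2 + m * (√|ξ' 0 + u|)⁻¹ := by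
            set a := √((ξ' 0 + u) ^ 2 + κ ^ 2 * y ^ 2) with ha
            have ha0 : 0 < a := hα _
            have h3 : (χ a)⁻¹ ≤ (min a (1/2))⁻¹ :=
              inv_anti₀ (lt_min ha0 (by norm_num)) (hχ _ ha0)
            have h4 : (min a (1/2))⁻¹ ≤ 2 + a⁻¹ := by
              have : 0 < a⁻¹ := inv_pos.2 ha0
              rcases min_choice a (1/2) with h | h <;> rw [h] <;> norm_num <;> linarith
            have h5 : a⁻¹ ≤ m * (√|ξ' 0 + u|)⁻¹ := by
              rw [hm, ← mul_inv, ← mul_inv, ← Real.sqrt_mul hκ.le]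
              apply inv_anti₀ (by positivity)
              apply nln_sqrt_mul_le (by positivity) ha0.le
              rw [ha, Real.sq_sqrt (by positivity), sq_abs]
              nlinarith
            linarith
          have b0 : E (ξ 0 - ξ' 0) * (2 + m * (√|ξ' 0 + u|)⁻¹) ≤ f 0 (ξ' 0) := by
            change _ ≤ (2 + m) * E (ξ 0 - ξ' 0) + m * nlnK (ξ' 0 + u)
            have e1 := mul_le_mul_of_nonneg_left (nlnK_ge hv) hm0
            have e2 := mul_le_mul_of_nonneg_left e1 (hE0 (ξ 0 - ξ' 0))
            have e3 := mul_le_mul_of_nonneg_right (hE1 (ξ 0 - ξ' 0))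
              (mul_nonneg hm0 (nlnK_nonneg (ξ' 0 + u)))
            linarith
          have bb : ∀ a : ℝ, a ≠ 0 → E a * (√|a|)⁻¹ ≤ E a + nlnK a := by
            intro a ha
            have e2 := mul_le_mul_of_nonneg_left (nlnK_ge ha) (hE0 a)
            have e3 := mul_le_mul_of_nonneg_right (hE1 a) (nlnK_nonneg a)
            linarith
          have b1 : E (ξ 1 - ξ' 1) * (√|ξ 1 - ξ' 1|)⁻¹ ≤ f 1 (ξ' 1) := bb _ h1'
          have b2 : E (ξ 2 - ξ' 2) * (√|ξ 2 - ξ' 2|)⁻¹ ≤ f 2 (ξ' 2) := bb _ h2'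
          have p0 := hE0 (ξ 0 - ξ' 0)
          have p1 := hE0 (ξ 1 - ξ' 1)
          have p2 := hE0 (ξ 2 - ξ' 2)
          have hχ1 := inv_nonneg.2 (hχ0 (ξ' 0 + u)).le
          rw [hexp, div_eq_mul_inv]
          calc _ ≤ E (ξ 0 - ξ' 0) * E (ξ 1 - ξ' 1) * E (ξ 2 - ξ' 2) *
                  ((√|ξ 1 - ξ' 1|)⁻¹ * (√|ξ 2 - ξ' 2|)⁻¹) * (2 + m * (√|ξ' 0 + u|)⁻¹) := by
                gcongr
            _ = (E (ξ 0 - ξ' 0) * (2 + m * (√|ξ' 0 + u|)⁻¹)) *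
                  (E (ξ 1 - ξ' 1) * (√|ξ 1 - ξ' 1|)⁻¹) * (E (ξ 2 - ξ' 2) * (√|ξ 2 - ξ' 2|)⁻¹) := by
                ring
            _ ≤ _ := by
                have q0 : 0 ≤ E (ξ 0 - ξ' 0) * (2 + m * (√|ξ' 0 + u|)⁻¹) := by positivity
                have q1 : 0 ≤ E (ξ 1 - ξ' 1) * (√|ξ 1 - ξ' 1|)⁻¹ := by positivity
                have q2 : 0 ≤ E (ξ 2 - ξ' 2) * (√|ξ 2 - ξ' 2|)⁻¹ := by positivity
                exact mul_le_mul (mul_le_mul b0 b1 q1 (q0.trans b0)) b2 q2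
                  (mul_nonneg (q0.trans b0) (q1.trans b1))
    _ = _ := by
        rw [nln_int_prod, i0, i1, i2, hm]
        ring

/-- degenerate case: the inner integrand is not integrable -/
lemma nln_degenerate (C : ℝ) (hC : 0 < C) (u : ℝ) (χ : ℝ → ℝ)
    (hid : ∀ s : ℝ, 0 ≤ s → s ≤ 1/2 → χ s = s) (hχ : ∀ s, 0 ≤ s → 0 ≤ χ s)
    (ξ : EuclideanSpace ℝ (Fin 3)) (hw : ξ 0 + u = 0) (κ : ℝ) :
    ∫ ξ' : EuclideanSpace ℝ (Fin 3), Real.exp (-C * ‖ξ - ξ'‖ ^ 2) / ‖ξ - ξ'‖ *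
        (χ (√((ξ' 0 + u) ^ 2 + κ ^ 2 * (0:ℝ) ^ 2)))⁻¹ = 0 := by
  apply integral_undef
  intro hint
  set F : EuclideanSpace ℝ (Fin 3) → ℝ := fun ξ' => Real.exp (-C * ‖ξ - ξ'‖ ^ 2) / ‖ξ - ξ'‖ *
        (χ (√((ξ' 0 + u) ^ 2 + κ ^ 2 * (0:ℝ) ^ 2)))⁻¹ with hF
  have hF0 : ∀ ξ', 0 ≤ F ξ' := fun ξ' => by
    have := hχ _ (Real.sqrt_nonneg ((ξ' 0 + u) ^ 2 + κ ^ 2 * (0:ℝ) ^ 2))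
    simp only [hF]
    positivity
  set c : ℝ := Real.exp (-C * 4) / 2 with hc
  have hc0 : 0 < c := by positivity
  set R := ∫ ξ', F ξ' with hR
  have hR0 : 0 ≤ R := integral_nonneg hF0
  set ε : ℝ := Real.exp (-(R / c + 1)) / 2 with hε
  have hε0 : 0 < ε := by positivity
  have hε1 : ε ≤ 1/2 := by
    have : Real.exp (-(R / c + 1)) ≤ 1 := Real.exp_le_one_iff.2 (by
      have : 0 ≤ R / c := by positivity
      linarith)
    rw [hε]; linarith
  let g : ℝ → ℝ := (Set.Ioc ε (1/2)).indicator (fun a => a⁻¹)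
  let e : ℝ → ℝ := (Set.Ioc (0:ℝ) 1).indicator (fun _ => (1:ℝ))
  have hgi : Integrable g := by
    refine (integrable_indicator_iff measurableSet_Ioc).2 ?_
    rw [← intervalIntegrable_iff_integrableOn_Ioc_of_le hε1]
    apply intervalIntegral.intervalIntegrable_inv
    · intro x hx
      rw [Set.uIcc_of_le hε1] at hx
      linarith [hx.1]
    · exact continuousOn_id
  have hgI : ∫ a, g a = R / c + 1 := by
    change ∫ a, (Set.Ioc ε (1/2)).indicator (fun a => a⁻¹) a = _
    rw [integral_indicator measurableSet_Ioc, ← intervalIntegral.integral_of_le hε1,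
      integral_inv_of_pos hε0 (by norm_num)]
    have : (1/2 : ℝ) / ε = Real.exp (R / c + 1) := by
      rw [hε, Real.exp_neg]; field_simp
    rw [this, Real.log_exp]
  have hei : Integrable e := by
    refine (integrable_indicator_iff measurableSet_Ioc).2 ?_
    exact integrableOn_const (by simp)
  have heI : ∫ a, e a = 1 := by
    change ∫ a, (Set.Ioc (0:ℝ) 1).indicator (fun _ => (1:ℝ)) a = _
    rw [integral_indicator measurableSet_Ioc]
    simp
  let f : Fin 3 → ℝ → ℝ := ![fun a => c * g (a + u), fun a => e (ξ 1 - a), fun a => e (ξ 2 - a)]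
  have hf : ∀ i, Integrable (f i) := by
    intro i
    fin_cases i
    · exact (hgi.comp_add_right u).const_mul _
    · exact hei.comp_sub_left (ξ 1)
    · exact hei.comp_sub_left (ξ 2)
  have i0 : ∫ a, f 0 a = R + c := by
    change ∫ a, c * g (a + u) = _
    rw [integral_const_mul, integral_add_right_eq_self g, hgI]
    field_simp
  have i1 : ∫ a, f 1 a = 1 := by
    change ∫ a, e (ξ 1 - a) = _
    rw [integral_sub_left_eq_self e volume, heI]
  have i2 : ∫ a, f 2 a = 1 := by
    change ∫ a, e (ξ 2 - a) = _
    rw [integral_sub_left_eq_self e volume, heI]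
  have key : ∫ ξ' : EuclideanSpace ℝ (Fin 3), f 0 (ξ' 0) * f 1 (ξ' 1) * f 2 (ξ' 2) ≤ R := by
    apply integral_mono (nln_integrable_prod f hf) hint
    intro ξ'
    change c * g (ξ' 0 + u) * e (ξ 1 - ξ' 1) * e (ξ 2 - ξ' 2) ≤ F ξ'
    by_cases h0 : ξ' 0 + u ∈ Set.Ioc ε (1/2)
    swap
    · have : g (ξ' 0 + u) = 0 := Set.indicator_of_notMem h0 _
      rw [this]; simpa using hF0 ξ'
    by_cases h1 : ξ 1 - ξ' 1 ∈ Set.Ioc (0:ℝ) 1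
    swap
    · have : e (ξ 1 - ξ' 1) = 0 := Set.indicator_of_notMem h1 _
      rw [this]; simpa using hF0 ξ'
    by_cases h2 : ξ 2 - ξ' 2 ∈ Set.Ioc (0:ℝ) 1
    swap
    · have : e (ξ 2 - ξ' 2) = 0 := Set.indicator_of_notMem h2 _
      rw [this]; simpa using hF0 ξ'
    have g0 : g (ξ' 0 + u) = (ξ' 0 + u)⁻¹ := Set.indicator_of_mem h0 _
    have e1 : e (ξ 1 - ξ' 1) = 1 := Set.indicator_of_mem h1 _
    have e2 : e (ξ 2 - ξ' 2) = 1 := Set.indicator_of_mem h2 _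
    rw [g0, e1, e2, mul_one, mul_one]
    have hn := nln_norm_sq (ξ - ξ')
    simp only [PiLp.sub_apply] at hn
    obtain ⟨h0a, h0b⟩ := h0
    obtain ⟨h1a, h1b⟩ := h1
    obtain ⟨h2a, h2b⟩ := h2
    have hv : 0 < ξ' 0 + u := hε0.trans h0a
    have hs : √((ξ' 0 + u) ^ 2 + κ ^ 2 * (0:ℝ) ^ 2) = ξ' 0 + u := by
      rw [show (ξ' 0 + u) ^ 2 + κ ^ 2 * (0:ℝ) ^ 2 = (ξ' 0 + u) ^ 2 by ring, Real.sqrt_sq hv.le]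
    have hn4 : ‖ξ - ξ'‖ ^ 2 ≤ 4 := by
      rw [hn, show ξ 0 - ξ' 0 = -(ξ' 0 + u) by linarith]
      nlinarith
    have hnpos : 0 < ‖ξ - ξ'‖ := by
      have : 0 < ‖ξ - ξ'‖ ^ 2 := by rw [hn]; positivity
      rcases (norm_nonneg (ξ - ξ')).eq_or_lt with h | h
      · rw [← h] at this; norm_num at this
      · exact h
    have hn2 : ‖ξ - ξ'‖ ≤ 2 := by nlinarith
    simp only [hF]
    rw [hs, hid _ hv.le h0b, hc]
    have : Real.exp (-C * 4) ≤ Real.exp (-C * ‖ξ - ξ'‖ ^ 2) := Real.exp_le_exp.2 (by nlinarith)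
    gcongr
  rw [nln_int_prod, i0, i1, i2] at key
  linarith

lemma nln_outer (t T : ℝ) (hT : 0 < T) :
    IntegrableOn (fun s => √T * ((√(t - s))⁻¹ + (√(s - (t - T)))⁻¹)) (Set.Icc (t - T) t) ∧
    ∫ s in Set.Icc (t - T) t, √T * ((√(t - s))⁻¹ + (√(s - (t - T)))⁻¹) = 4 * T := by
  have hle : t - T ≤ t := by linarith
  have h := nln_ii T hT.le
  have ha : IntervalIntegrable (fun s => (√(t - s))⁻¹) volume (t - T) t := by
    have := (h.comp_sub_left t).symm
    simpa using this
  have hb : IntervalIntegrable (fun s => (√(s - (t - T)))⁻¹) volume (t - T) t := by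
    have := h.comp_sub_right (t - T)
    simpa using this
  constructor
  · rw [integrableOn_Icc_iff_integrableOn_Ioc, ← intervalIntegrable_iff_integrableOn_Ioc_of_le hle]
    exact (ha.add hb).const_mul _
  · rw [integral_Icc_eq_integral_Ioc, ← intervalIntegral.integral_of_le hle,
      intervalIntegral.integral_const_mul, intervalIntegral.integral_add ha hb]
    rw [intervalIntegral.integral_comp_sub_left (fun s => (√s)⁻¹) t,
      intervalIntegral.integral_comp_sub_right (fun s => (√s)⁻¹) (t - T)]
    simp only [sub_self, sub_sub_cancel]
    rw [nln_int T hT.le]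
    nlinarith [Real.mul_self_sqrt hT.le]

lemma nln_chi (χ χ' : ℝ → ℝ)
    (hderiv : ∀ s ≥ (0:ℝ), HasDerivAt χ (χ' s) s)
    (hmono : ∀ s ≥ (0:ℝ), 0 ≤ χ' s)
    (hid : ∀ s : ℝ, 0 ≤ s → s ≤ 1/2 → χ s = s)
    (hone : ∀ s : ℝ, 2 ≤ s → χ s = 1)
    (hbound : ∀ s ≥ (0:ℝ), |χ' s| ≤ 1) :
    (∀ s, 0 ≤ s → min s (1/2) ≤ χ s) ∧ (∀ s, 0 ≤ s → χ s ≤ s) ∧ (∀ s, 0 ≤ s → χ s ≤ 1) := by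
  have hm : MonotoneOn χ (Set.Ici 0) := by
    apply monotoneOn_of_hasDerivWithinAt_nonneg (convex_Ici 0) (f' := χ')
    · exact fun s hs => (hderiv s hs).continuousAt.continuousWithinAt
    · intro s hs
      exact (hderiv s (interior_subset hs)).hasDerivWithinAt
    · exact fun s hs => hmono s (interior_subset hs)
  have hm2 : MonotoneOn (fun s => s - χ s) (Set.Ici 0) := by
    apply monotoneOn_of_hasDerivWithinAt_nonneg (convex_Ici 0) (f' := fun s => 1 - χ' s)
    · exact fun s hs => (continuousAt_id.sub (hderiv s hs).continuousAt).continuousWithinAt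
    · intro s hs
      exact ((hasDerivAt_id s).sub (hderiv s (interior_subset hs))).hasDerivWithinAt
    · intro s hs
      have := (abs_le.1 (hbound s (interior_subset hs))).2
      linarith
  refine ⟨fun s hs => ?_, fun s hs => ?_, fun s hs => ?_⟩
  · rcases le_total s (1/2) with h | h
    · rw [hid s hs h]; exact min_le_left _ _
    · have := hm (show (1/2:ℝ) ∈ Set.Ici 0 by simp) hs h
      rw [hid (1/2) (by norm_num) le_rfl] at this
      exact (min_le_right _ _).trans this
  · have := hm2 (show (0:ℝ) ∈ Set.Ici 0 by simp) hs hs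
    dsimp only at this
    rw [hid 0 le_rfl (by norm_num)] at this
    linarith
  · have := hm hs (show max s 2 ∈ Set.Ici (0:ℝ) from hs.trans (le_max_left _ _)) (le_max_left _ _)
    rwa [hone _ (le_max_right _ _)] at this

/-- large-time part of Lemma NLN, with `c = 1/8`:
for every `C > 0` there are `C' > 0` and `t₀ ≥ 1` such that for all `t ≥ t₀`,
`1 < T ≤ t`, `x ≥ 0` and `ξ` with `x − T(ξ₁+u) ≥ 0`,
`∫_{t−T}^t e^{−ν(ξ)(t−s)/2} ∫ e^{−C|ξ−ξ'|²}/|ξ−ξ'| · α(x−(t−s)(ξ₁+u),ξ')⁻¹ dξ' ds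
  ≤ C' t / α(x,ξ)`. -/
theorem nln_large_time (ν₀ u : ℝ) (hν₀ : 0 < ν₀) (hu : |u| ≤ 1/2)
    (χ χ' : ℝ → ℝ)
    (hderiv : ∀ s ≥ (0:ℝ), HasDerivAt χ (χ' s) s)
    (hcont : ContinuousOn χ' (Set.Ici (0:ℝ)))
    (hmono : ∀ s ≥ (0:ℝ), 0 ≤ χ' s)
    (hid : ∀ s : ℝ, 0 ≤ s → s ≤ 1/2 → χ s = s)
    (hone : ∀ s : ℝ, 2 ≤ s → χ s = 1)
    (hbound : ∀ s ≥ (0:ℝ), |χ' s| ≤ 1)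
    (ν : EuclideanSpace ℝ (Fin 3) → ℝ) (hνmeas : Measurable ν)
    (hνlb : ∀ ξ, ν₀ * (1 + ‖ξ‖) ≤ ν ξ) :
    ∀ C > (0:ℝ), ∃ C' > (0:ℝ), ∃ t₀ ≥ (1:ℝ), ∀ t ≥ t₀, ∀ T : ℝ, 1 < T → T ≤ t →
      ∀ x ≥ (0:ℝ), ∀ ξ : EuclideanSpace ℝ (Fin 3), 0 ≤ x - T * (ξ 0 + u) →
        (∫ s in Set.Icc (t - T) t, Real.exp (-ν ξ * (t - s) / 2) *
            ∫ ξ' : EuclideanSpace ℝ (Fin 3),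
              Real.exp (-C * ‖ξ - ξ'‖ ^ 2) / ‖ξ - ξ'‖ *
                (χ (alphaTilde u (1/8) ν₀ (x - (t - s) * (ξ 0 + u)) ξ'))⁻¹) ≤
          C' * t / χ (alphaTilde u (1/8) ν₀ x ξ) := by

  intro C hC
  obtain ⟨hχ1, hχ2, hχ3⟩ := nln_chi χ χ' hderiv hmono hid hone hbound
  set κ : ℝ := 1 / 8 * ν₀ with hκ
  have hκ0 : 0 < κ := by positivity
  obtain ⟨A, B, hA, hB, hin⟩ := nln_inner_s12 C hC u κ hκ0 χ (fun s hs => hχ1 s hs.le)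
  refine ⟨A + 4 * B * √(1 + κ) + 1, by positivity, 1, le_rfl, ?_⟩
  intro t ht T hT1 hTt x hx ξ hxT
  have hχn : ∀ s, 0 ≤ s → 0 ≤ χ s := fun s hs => (le_min hs (by norm_num)).trans (hχ1 s hs)
  simp only [alphaTilde, ← hκ]
  set w := ξ 0 + u with hw
  set M := max x |w| with hM
  have hM0 : 0 ≤ M := hx.trans (le_max_left _ _)
  rcases hM0.eq_or_lt with hMz | hMpos
  · -- degenerate case
    have hx0 : x = 0 := le_antisymm (hMz ▸ le_max_left x |w|) hx
    have hw0 : w = 0 := abs_eq_zero.1 (le_antisymm (hMz ▸ le_max_right x |w|) (abs_nonneg _))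
    have hz : ∀ s : ℝ, x - (t - s) * w = 0 := fun s => by rw [hx0, hw0]; ring
    simp only [hz, nln_degenerate C hC u χ hid hχn ξ hw0 κ, mul_zero, integral_zero]
    have := hχn (√(w ^ 2 + κ ^ 2 * x ^ 2)) (Real.sqrt_nonneg _)
    positivity
  have hT0 : 0 < T := by linarith
  have hsM : 0 < √M := Real.sqrt_pos.2 hMpos
  obtain ⟨hJi, hJ⟩ := nln_outer t T hT0
  -- the weight at the endpoint
  set a := √(w ^ 2 + κ ^ 2 * x ^ 2) with ha
  have ha0 : 0 < a := by
    apply Real.sqrt_pos.2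
    rcases lt_max_iff.1 hMpos with h | h
    · positivity
    · have : 0 < w ^ 2 := by rw [← sq_abs]; positivity
      positivity
  have hαpos : 0 < χ a := lt_of_lt_of_le (lt_min ha0 (by norm_num)) (hχ1 a ha0.le)
  have haM : a ≤ (1 + κ) * M := by
    apply Real.sqrt_le_iff.2 ⟨by positivity, ?_⟩
    have h1 : w ^ 2 ≤ M ^ 2 := by
      rw [← sq_abs w]
      exact pow_le_pow_left₀ (abs_nonneg _) (le_max_right _ _) 2
    have h2 : x ^ 2 ≤ M ^ 2 := pow_le_pow_left₀ hx (le_max_left _ _) 2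
    have h3 := mul_le_mul_of_nonneg_left h2 (sq_nonneg κ)
    nlinarith [mul_nonneg hκ0.le (sq_nonneg M)]
  have hαM : χ a ≤ √(1 + κ) * √M := by
    rw [← Real.sqrt_mul (by positivity)]
    apply Real.le_sqrt_of_sq_le
    have h1 := hχ2 a ha0.le
    have h2 := hχ3 a ha0.le
    nlinarith
  -- lower bound on the trajectory
  have hy : ∀ s ∈ Set.Ioo (t - T) t, 0 < x - (t - s) * w ∧
      (√(x - (t - s) * w))⁻¹ ≤ (√M)⁻¹ * (√T * ((√(t - s))⁻¹ + (√(s - (t - T)))⁻¹)) := by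
    intro s hs
    obtain ⟨hs1, hs2⟩ := hs
    have p1 : 0 < t - s := by linarith
    have p2 : 0 < s - (t - T) := by linarith
    have gen : ∀ r, 0 < r → M * r ≤ T * (x - (t - s) * w) → 0 < x - (t - s) * w ∧
        (√(x - (t - s) * w))⁻¹ ≤ (√M)⁻¹ * (√T * (√r)⁻¹) := by
      intro r hr h
      have hpos : 0 < x - (t - s) * w := by
        have : 0 < T * (x - (t - s) * w) := lt_of_lt_of_le (by positivity) h
        exact (mul_pos_iff_of_pos_left hT0).1 this
      refine ⟨hpos, ?_⟩
      have h5 : √M * √r ≤ √T * √(x - (t - s) * w) := by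
        rw [← Real.sqrt_mul hM0, ← Real.sqrt_mul hT0.le]
        exact Real.sqrt_le_sqrt h
      have hsr : 0 < √r := Real.sqrt_pos.2 hr
      have hsy : 0 < √(x - (t - s) * w) := Real.sqrt_pos.2 hpos
      have : (√M)⁻¹ * (√T * (√r)⁻¹) = √T / (√M * √r) := by field_simp
      rw [this, inv_eq_one_div, div_le_div_iff₀ hsy (by positivity)]
      linarith
    have hsT : 0 < √T := Real.sqrt_pos.2 hT0
    rcases le_total 0 w with h | h
    · have hMx : M = x := by
        apply max_eq_left
        rw [abs_of_nonneg h]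
        nlinarith
      obtain ⟨q1, q2⟩ := gen (s - (t - T)) p2 (by rw [hMx]; nlinarith)
      refine ⟨q1, q2.trans ?_⟩
      gcongr
      have : 0 ≤ (√(t - s))⁻¹ := by positivity
      linarith
    · have hMle : M * (t - s) ≤ T * (x - (t - s) * w) := by
        rcases max_choice x |w| with h6 | h6
        · rw [hM, h6]
          nlinarith [mul_nonneg (mul_nonneg hT0.le p1.le) (neg_nonneg.2 h)]
        · rw [hM, h6, abs_of_nonpos h]
          nlinarith [mul_nonneg p1.le (neg_nonneg.2 h), mul_nonneg hT0.le hx]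
      obtain ⟨q1, q2⟩ := gen (t - s) p1 hMle
      refine ⟨q1, q2.trans ?_⟩
      gcongr
      have : 0 ≤ (√(s - (t - T)))⁻¹ := by positivity
      linarith
  have hvol : volume.real (Set.Icc (t - T) t) = T := by
    rw [Real.volume_real_Icc_of_le (by linarith)]; ring
  have hci : IntegrableOn (fun _ : ℝ => A) (Set.Icc (t - T) t) :=
    integrableOn_const (by simp)
  calc _ ≤ ∫ s in Set.Icc (t - T) t,
        (A + (B * (√M)⁻¹) * (√T * ((√(t - s))⁻¹ + (√(s - (t - T)))⁻¹))) := by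
        apply integral_mono_of_nonneg
        · refine Filter.Eventually.of_forall fun s => ?_
          refine mul_nonneg (Real.exp_pos _).le (integral_nonneg fun ξ' => ?_)
          have := hχn _ (Real.sqrt_nonneg ((ξ' 0 + u) ^ 2 + κ ^ 2 * (x - (t - s) * w) ^ 2))
          dsimp
          positivity
        · exact hci.add (hJi.const_mul _)
        · rw [← Measure.restrict_congr_set (Ioo_ae_eq_Icc (a := t - T) (b := t))]
          filter_upwards [ae_restrict_mem measurableSet_Ioo] with s hs
          obtain ⟨q1, q2⟩ := hy s hs
          have hI := hin _ q1 ξ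
          have hν : 0 ≤ ν ξ := le_trans (by positivity) (hνlb ξ)
          have hexp : Real.exp (-ν ξ * (t - s) / 2) ≤ 1 := by
            apply Real.exp_le_one_iff.2
            have := mul_nonneg hν (sub_nonneg.2 hs.2.le)
            linarith
          refine (mul_le_of_le_one_left (integral_nonneg fun ξ' => ?_) hexp).trans (hI.trans ?_)
          · have := hχn _ (Real.sqrt_nonneg ((ξ' 0 + u) ^ 2 + κ ^ 2 * (x - (t - s) * w) ^ 2))
            dsimp
            positivity
          · have := mul_le_mul_of_nonneg_left q2 hB
            linarith
    _ = A * T + B * (√M)⁻¹ * (4 * T) := by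
        rw [integral_add hci (hJi.const_mul _), integral_const_mul, hJ, setIntegral_const, hvol]
        simp only [smul_eq_mul]; ring
    _ ≤ _ := by
        rw [le_div_iff₀ hαpos]
        have e1 : A * χ a ≤ A := mul_le_of_le_one_right hA (hχ3 a ha0.le)
        have e2 : (√M)⁻¹ * χ a ≤ √(1 + κ) := by
          rw [inv_mul_le_iff₀ hsM]; linarith
        have e3 := mul_le_mul_of_nonneg_left e2 hB
        calc (A * T + B * (√M)⁻¹ * (4 * T)) * χ a
            = (A * χ a + 4 * (B * ((√M)⁻¹ * χ a))) * T := by ring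
          _ ≤ (A + 4 * B * √(1 + κ) + 1) * T := by
              apply mul_le_mul_of_nonneg_right _ hT0.le
              linarith
          _ ≤ _ := by
              apply mul_le_mul_of_nonneg_left hTt
              positivity
end
end

section
/- For every constant C > 0 there exist a constant C' > 0 and a time t₀ ≥ 1 such that the following holds. For all t ≥ t₀, all x ≥ 0 and all ξ = (ξ₁,ξ₂,ξ₃) ∈ ℝ³ with x − t(ξ₁+u) ≥ 0, ∫₀^{t} e^{−ν(ξ)(t−s)} · ( ∫_{ℝ³} e^{−C|ξ'|²} · α(x−(ξ₁+u)(t−s), ξ')⁻¹ dξ' ) ds ≤ C' · t / α(x,ξ). -/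
open MeasureTheory

noncomputable section

/-- Truncated inverse square root. -/
def hSing : ℝ → ℝ := Set.indicator (Set.Ioc (0:ℝ) 1) (fun z => z ^ (-(1/2) : ℝ))

/-- Integrable majorant of `|z+u|^{-1/2}`. -/
def gSing (u z : ℝ) : ℝ := 1 + hSing (z + u) + hSing (-(z + u))

lemma hSing_nonneg (z : ℝ) : 0 ≤ hSing z := by
  unfold hSing
  apply Set.indicator_nonneg
  intro x hx
  exact Real.rpow_nonneg hx.1.le _

lemma gSing_nonneg (u z : ℝ) : 0 ≤ gSing u z := by
  have := hSing_nonneg (z + u)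
  have := hSing_nonneg (-(z + u))
  unfold gSing; linarith

lemma rpow_neg_half {z : ℝ} (hz : 0 ≤ z) : z ^ (-(1/2) : ℝ) = (Real.sqrt z)⁻¹ := by
  rw [Real.rpow_neg hz, Real.sqrt_eq_rpow]

lemma hSing_integrable : Integrable hSing := by
  unfold hSing
  rw [integrable_indicator_iff measurableSet_Ioc]
  have := intervalIntegral.intervalIntegrable_rpow' (a := 0) (b := 1) (r := -(1/2)) (by norm_num)
  exact (intervalIntegrable_iff_integrableOn_Ioc_of_le zero_le_one).1 this

lemma gSing_ge (u z : ℝ) (hz : z + u ≠ 0) : (Real.sqrt |z + u|)⁻¹ ≤ gSing u z := by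
  have h1 := hSing_nonneg (z + u)
  have h2 := hSing_nonneg (-(z + u))
  by_cases hb : |z + u| ≤ 1
  · rcases lt_or_gt_of_ne hz with h | h
    · have : hSing (-(z+u)) = (Real.sqrt |z + u|)⁻¹ := by
        rw [abs_of_neg h] at hb ⊢
        unfold hSing
        rw [Set.indicator_of_mem (Set.mem_Ioc.2 ⟨by linarith, hb⟩), rpow_neg_half (by linarith)]
      unfold gSing; linarith
    · have : hSing (z+u) = (Real.sqrt |z + u|)⁻¹ := by
        rw [abs_of_pos h] at hb ⊢
        unfold hSing
        rw [Set.indicator_of_mem (Set.mem_Ioc.2 ⟨by linarith, hb⟩), rpow_neg_half (by linarith)]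
      unfold gSing; linarith
  · push Not at hb
    have : (Real.sqrt |z + u|)⁻¹ ≤ 1 := by
      apply inv_le_one_of_one_le₀
      rw [Real.one_le_sqrt]; exact hb.le
    unfold gSing; linarith

lemma gauss_gSing_integrable (u C : ℝ) (hC : 0 < C) :
    Integrable (fun z : ℝ => Real.exp (-C * z ^ 2) * gSing u z) := by
  have hI := integrable_exp_neg_mul_sq hC
  have h1 : Integrable (fun z => hSing (z + u)) := hSing_integrable.comp_add_right u
  have h2 : Integrable (fun z => hSing (-(z + u))) :=
    (hSing_integrable.comp_neg).comp_add_right u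
  have hb : ∀ᵐ z : ℝ, ‖Real.exp (-C * z ^ 2)‖ ≤ 1 := by
    refine Filter.Eventually.of_forall fun z => ?_
    rw [Real.norm_eq_abs, Real.abs_exp, Real.exp_le_one_iff]
    nlinarith [sq_nonneg z, mul_nonneg hC.le (sq_nonneg z)]
  have h12 := (h1.add h2).bdd_mul hI.aestronglyMeasurable hb
  refine (hI.add h12).congr (Filter.Eventually.of_forall fun z => ?_)
  simp only [Pi.add_apply, gSing]
  ring

lemma norm_sq_three (ξ : EuclideanSpace ℝ (Fin 3)) :
    ‖ξ‖ ^ 2 = ξ 0 ^ 2 + ξ 1 ^ 2 + ξ 2 ^ 2 := by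
  rw [EuclideanSpace.real_norm_sq_eq, Fin.sum_univ_three]

lemma gauss3_integrable (u C : ℝ) (hC : 0 < C) :
    Integrable (fun ξ : EuclideanSpace ℝ (Fin 3) => Real.exp (-C * ‖ξ‖ ^ 2) * gSing u (ξ 0)) := by
  have hI := integrable_exp_neg_mul_sq hC
  have hG := gauss_gSing_integrable u C hC
  have hp : Integrable (fun x : Fin 3 → ℝ => ∏ i, (![fun z : ℝ => Real.exp (-C * z ^ 2) * gSing u z,
      fun z : ℝ => Real.exp (-C * z ^ 2), fun z : ℝ => Real.exp (-C * z ^ 2)] i) (x i)) := by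
    apply Integrable.fintype_prod
    intro i
    fin_cases i
    · exact hG
    · exact hI
    · exact hI
  have := ((PiLp.volume_preserving_ofLp (Fin 3)).integrable_comp hp.aestronglyMeasurable).2 hp
  refine this.congr (Filter.Eventually.of_forall fun ξ => ?_)
  simp only [Function.comp, Fin.prod_univ_three, norm_sq_three, mul_add, Real.exp_add]
  simp
  ring

lemma gauss3_integrable' (C : ℝ) (hC : 0 < C) :
    Integrable (fun ξ : EuclideanSpace ℝ (Fin 3) => Real.exp (-C * ‖ξ‖ ^ 2)) := by
  have hI := integrable_exp_neg_mul_sq hC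
  have hp : Integrable (fun x : Fin 3 → ℝ => ∏ i, ((fun _ : Fin 3 => fun z : ℝ => Real.exp (-C * z ^ 2)) i) (x i)) := by
    exact Integrable.fintype_prod (f := fun _ : Fin 3 => fun z : ℝ => Real.exp (-C * z ^ 2))
      (μ := fun _ : Fin 3 => (volume : Measure ℝ)) (fun _ => hI)
  have := ((PiLp.volume_preserving_ofLp (Fin 3)).integrable_comp hp.aestronglyMeasurable).2 hp
  refine this.congr (Filter.Eventually.of_forall fun ξ => ?_)
  simp only [Function.comp, Fin.prod_univ_three, norm_sq_three, mul_add, Real.exp_add]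

lemma ae_ne (u : ℝ) : ∀ᵐ ξ : EuclideanSpace ℝ (Fin 3), ξ 0 + u ≠ 0 := by
  have h1 : ∀ᵐ z : ℝ, z + u ≠ 0 := by
    have : ∀ᵐ z : ℝ, z ≠ -u := by simp [ae_iff]
    filter_upwards [this] with z hz h
    exact hz (by linarith)
  have h2 := (Measure.quasiMeasurePreserving_eval (μ := fun _ : Fin 3 => (volume : Measure ℝ)) 0).ae h1
  exact (PiLp.volume_preserving_ofLp (Fin 3)).quasiMeasurePreserving.ae h2

lemma not_integrable_sing (u C : ℝ) (hu : |u| ≤ 1/2) (hC : 0 < C) (χ : ℝ → ℝ)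
    (hid : ∀ s : ℝ, 0 ≤ s → s ≤ 1/2 → χ s = s) :
    ¬ Integrable (fun ξ : EuclideanSpace ℝ (Fin 3) =>
      Real.exp (-C * ‖ξ‖ ^ 2) * (χ |ξ 0 + u|)⁻¹) := by
  intro h
  have e1 := PiLp.volume_preserving_ofLp (Fin 3)
  have e2 := volume_preserving_piFinSuccAbove (fun _ : Fin 3 => ℝ) 0
  let F : ℝ × (Fin 2 → ℝ) → ℝ := fun p =>
    Real.exp (-C * (p.1 ^ 2 + (p.2 0 ^ 2 + p.2 1 ^ 2))) * (χ |p.1 + u|)⁻¹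
  let G : (Fin 3 → ℝ) → ℝ := F ∘ (MeasurableEquiv.piFinSuccAbove (fun _ : Fin 3 => ℝ) 0)
  have hG : Integrable (G ∘ (WithLp.ofLp : EuclideanSpace ℝ (Fin 3) → Fin 3 → ℝ)) := by
    refine h.congr (Filter.Eventually.of_forall fun ξ => ?_)
    simp only [G, F, Function.comp, norm_sq_three, MeasurableEquiv.piFinSuccAbove_apply]
    rw [add_assoc]
    rfl
  rw [e1.integrable_comp_emb (MeasurableEquiv.toLp 2 (Fin 3 → ℝ)).symm.measurableEmbedding] at hG
  have hF : Integrable F := (e2.integrable_comp_emb (MeasurableEquiv.measurableEmbedding _)).1 hG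
  obtain ⟨y, hy⟩ := (Integrable.prod_left_ae hF).exists
  refine not_intervalIntegrable_of_sub_inv_isBigO_punctured (f := fun z => F (z, y))
    (a := -u) (b := -u+1) (c := -u) ?_ (by linarith) Set.left_mem_uIcc hy.intervalIntegrable
  set Y := y 0 ^ 2 + y 1 ^ 2 with hY
  apply Asymptotics.IsBigO.of_bound (Real.exp (C * (1 + Y)))
  have hnear : ∀ᶠ z in nhds (-u), |z + u| < 1/2 := by
    have : ContinuousAt (fun z : ℝ => |z + u|) (-u) := by fun_prop
    apply this.eventually_lt continuousAt_const
    simp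
  filter_upwards [nhdsWithin_le_nhds hnear] with z hz
  simp only [F]
  rw [hid _ (abs_nonneg _) hz.le, ← hY, sub_neg_eq_add, norm_mul, Real.norm_eq_abs, Real.norm_eq_abs,
    Real.norm_eq_abs, Real.abs_exp, abs_inv, abs_inv, abs_abs, ← mul_assoc, ← Real.exp_add]
  have hzz : z ^ 2 ≤ 1 := by
    rw [abs_lt] at hz; rw [abs_le] at hu
    nlinarith
  have : 1 ≤ Real.exp (C * (1 + Y) + -C * (z ^ 2 + Y)) := by
    rw [Real.one_le_exp_iff]; nlinarith
  have h0 : 0 ≤ |z + u|⁻¹ := by positivity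
  nlinarith

lemma chi_lower (χ χ' : ℝ → ℝ)
    (hderiv : ∀ s ≥ (0:ℝ), HasDerivAt χ (χ' s) s)
    (hmono : ∀ s ≥ (0:ℝ), 0 ≤ χ' s)
    (hid : ∀ s : ℝ, 0 ≤ s → s ≤ 1/2 → χ s = s)
    (hone : ∀ s : ℝ, 2 ≤ s → χ s = 1) :
    (∀ r, 0 ≤ r → 0 ≤ χ r) ∧ (∀ r, 0 < r → 0 < χ r ∧ (χ r)⁻¹ ≤ 2 + r⁻¹) ∧
    (∀ r, 0 ≤ r → χ r ≤ 1) ∧ (∀ r, 0 ≤ r → χ r ≤ 2 * r) := by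
  have hm : MonotoneOn χ (Set.Ici 0) := by
    apply monotoneOn_of_deriv_nonneg (convex_Ici 0)
    · intro s hs; exact (hderiv s hs).continuousAt.continuousWithinAt
    · intro s hs
      rw [interior_Ici] at hs
      exact (hderiv s (le_of_lt hs)).differentiableAt.differentiableWithinAt
    · intro s hs
      rw [interior_Ici] at hs
      rw [(hderiv s (le_of_lt hs)).deriv]
      exact hmono s (le_of_lt hs)
  have hhalf : ∀ r, 1/2 ≤ r → 1/2 ≤ χ r := by
    intro r hr
    rw [← hid (1/2) (by norm_num) le_rfl]
    exact hm (by norm_num) (by simp; linarith) hr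
  have hle1 : ∀ r, 0 ≤ r → χ r ≤ 1 := by
    intro r hr
    rw [← hone (max r 2) (le_max_right _ _)]
    exact hm hr (by simp) (le_max_left _ _)
  refine ⟨?_, ?_, hle1, ?_⟩
  · intro r hr
    rcases le_total r (1/2) with h | h
    · rw [hid r hr h]; exact hr
    · linarith [hhalf r h]
  · intro r hr
    have hri : 0 < r⁻¹ := inv_pos.2 hr
    rcases le_total r (1/2) with h | h
    · rw [hid r hr.le h]; exact ⟨hr, by linarith⟩
    · have h1 := hhalf r h
      refine ⟨by linarith, ?_⟩
      have : (χ r)⁻¹ ≤ (1/2)⁻¹ := inv_anti₀ (by norm_num) h1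
      norm_num at this; linarith
  · intro r hr
    rcases le_total r (1/2) with h | h
    · rw [hid r hr h]; linarith
    · linarith [hle1 r hr]

/-- Bound of the inner integral. -/
lemma inner_bound (u C ν₀ : ℝ) (hC : 0 < C) (hν₀ : 0 < ν₀) (χ : ℝ → ℝ)
    (h0 : ∀ r, 0 ≤ r → 0 ≤ χ r) (hinv : ∀ r, 0 < r → 0 < χ r ∧ (χ r)⁻¹ ≤ 2 + r⁻¹)
    (X : ℝ) (hX : 0 < X) :
    (∫ ξ' : EuclideanSpace ℝ (Fin 3), Real.exp (-C * ‖ξ'‖ ^ 2) *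
      (χ (alphaTilde u (1/8) ν₀ X ξ'))⁻¹) ≤
    2 * (∫ ξ' : EuclideanSpace ℝ (Fin 3), Real.exp (-C * ‖ξ'‖ ^ 2)) +
    ((Real.sqrt (1/8 * ν₀))⁻¹ *
      ∫ ξ' : EuclideanSpace ℝ (Fin 3), Real.exp (-C * ‖ξ'‖ ^ 2) * gSing u (ξ' 0)) *
      (Real.sqrt X)⁻¹ := by
  set K := (Real.sqrt (1/8 * ν₀))⁻¹ with hK
  have i1 := (gauss3_integrable' C hC).const_mul 2
  have i2 := (gauss3_integrable u C hC).const_mul (K * (Real.sqrt X)⁻¹)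
  have hE : 2 * (∫ ξ' : EuclideanSpace ℝ (Fin 3), Real.exp (-C * ‖ξ'‖ ^ 2)) +
    (K * ∫ ξ' : EuclideanSpace ℝ (Fin 3), Real.exp (-C * ‖ξ'‖ ^ 2) * gSing u (ξ' 0)) *
      (Real.sqrt X)⁻¹ = ∫ ξ' : EuclideanSpace ℝ (Fin 3), (2 * Real.exp (-C * ‖ξ'‖ ^ 2) +
        K * (Real.sqrt X)⁻¹ * (Real.exp (-C * ‖ξ'‖ ^ 2) * gSing u (ξ' 0))) := by
    rw [integral_add i1 i2, integral_const_mul, integral_const_mul]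
    ring
  rw [hE]
  apply integral_mono_of_nonneg
  · refine Filter.Eventually.of_forall fun ξ => ?_
    exact mul_nonneg (Real.exp_nonneg _) (inv_nonneg.2 (h0 _ (Real.sqrt_nonneg _)))
  · exact i1.add i2
  · filter_upwards [ae_ne u] with ξ hξ
    have hg := gSing_ge u (ξ 0) hξ
    set b := ξ 0 + u with hb
    have hbp : 0 < |b| := abs_pos.2 hξ
    have hprod : Real.sqrt |b| * Real.sqrt (1/8 * ν₀) * Real.sqrt X ≤ alphaTilde u (1/8) ν₀ X ξ := by
      rw [← Real.sqrt_mul (abs_nonneg b), ← Real.sqrt_mul (by positivity)]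
      unfold alphaTilde
      apply Real.sqrt_le_sqrt
      rw [← hb, ← sq_abs b]
      have : 0 ≤ |b| * (1/8 * ν₀ * X) := by positivity
      nlinarith [sq_nonneg (|b| - 1/8 * ν₀ * X)]
    have hpos : 0 < Real.sqrt |b| * Real.sqrt (1/8 * ν₀) * Real.sqrt X := by positivity
    have h1 := (hinv _ (hpos.trans_le hprod)).2
    have h2 := inv_anti₀ hpos hprod
    rw [mul_inv, mul_inv, ← hK] at h2
    have hKX : 0 ≤ K * (Real.sqrt X)⁻¹ := by positivity
    have h3 : (χ (alphaTilde u (1/8) ν₀ X ξ))⁻¹ ≤ 2 + K * (Real.sqrt X)⁻¹ * gSing u (ξ 0) := by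
      have := mul_le_mul_of_nonneg_left hg hKX
      linarith
    have := mul_le_mul_of_nonneg_left h3 (Real.exp_nonneg (-C * ‖ξ‖ ^ 2))
    show _ ≤ 2 * Real.exp (-C * ‖ξ‖ ^ 2) +
        K * (Real.sqrt X)⁻¹ * (Real.exp (-C * ‖ξ‖ ^ 2) * gSing u (ξ 0))
    linarith

/-- Time integral of the majorant. -/
lemma time_integral (A B t : ℝ) (ht : 0 ≤ t) :
    IntegrableOn (fun s : ℝ => A + B * (s ^ (-(1/2) : ℝ) + (t - s) ^ (-(1/2) : ℝ))) (Set.Icc 0 t) ∧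
    ∫ s in Set.Icc 0 t, (A + B * (s ^ (-(1/2) : ℝ) + (t - s) ^ (-(1/2) : ℝ))) =
      A * t + B * (4 * Real.sqrt t) := by
  have j1 : IntervalIntegrable (fun s : ℝ => s ^ (-(1/2) : ℝ)) volume 0 t :=
    intervalIntegral.intervalIntegrable_rpow' (by norm_num)
  have j2 : IntervalIntegrable (fun s : ℝ => (t - s) ^ (-(1/2) : ℝ)) volume 0 t := by
    have := (j1.comp_sub_left t).symm
    simpa using this
  have j3 := (intervalIntegrable_const (μ := volume) (a := 0) (b := t) (c := A)).add
    ((j1.add j2).const_mul B)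
  have v1 : ∫ s in (0:ℝ)..t, s ^ (-(1/2) : ℝ) = 2 * Real.sqrt t := by
    rw [integral_rpow (Or.inl (by norm_num)), Real.sqrt_eq_rpow]
    norm_num
    ring
  have v2 : ∫ s in (0:ℝ)..t, (t - s) ^ (-(1/2) : ℝ) = 2 * Real.sqrt t := by
    rw [intervalIntegral.integral_comp_sub_left (fun s : ℝ => s ^ (-(1/2) : ℝ)) t]
    simpa using v1
  constructor
  · exact (intervalIntegrable_iff_integrableOn_Icc_of_le ht).1 j3
  · rw [integral_Icc_eq_integral_Ioc, ← intervalIntegral.integral_of_le ht,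
      intervalIntegral.integral_add intervalIntegrable_const ((j1.add j2).const_mul B),
      intervalIntegral.integral_const_mul, intervalIntegral.integral_add j1 j2, v1, v2]
    simp
    ring

/-- first part of Lemma NLN-inner, with `c = 1/8`:
for every `C > 0` there are `C' > 0` and `t₀ ≥ 1` such that for all `t ≥ t₀`,
`x ≥ 0` and `ξ` with `x − t(ξ₁+u) ≥ 0`,
`∫₀^t e^{−ν(ξ)(t−s)} ∫ e^{−C|ξ'|²} α(x−(ξ₁+u)(t−s),ξ')⁻¹ dξ' ds ≤ C' t / α(x,ξ)`. -/
theorem nln_inner (ν₀ u : ℝ) (hν₀ : 0 < ν₀) (hu : |u| ≤ 1/2)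
    (χ χ' : ℝ → ℝ)
    (hderiv : ∀ s ≥ (0:ℝ), HasDerivAt χ (χ' s) s)
    (hcont : ContinuousOn χ' (Set.Ici (0:ℝ)))
    (hmono : ∀ s ≥ (0:ℝ), 0 ≤ χ' s)
    (hid : ∀ s : ℝ, 0 ≤ s → s ≤ 1/2 → χ s = s)
    (hone : ∀ s : ℝ, 2 ≤ s → χ s = 1)
    (hbound : ∀ s ≥ (0:ℝ), |χ' s| ≤ 1)
    (ν : EuclideanSpace ℝ (Fin 3) → ℝ) (hνmeas : Measurable ν)
    (hνlb : ∀ ξ, ν₀ * (1 + ‖ξ‖) ≤ ν ξ) :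
    ∀ C > (0:ℝ), ∃ C' > (0:ℝ), ∃ t₀ ≥ (1:ℝ), ∀ t ≥ t₀,
      ∀ x ≥ (0:ℝ), ∀ ξ : EuclideanSpace ℝ (Fin 3), 0 ≤ x - t * (ξ 0 + u) →
        (∫ s in Set.Icc (0:ℝ) t, Real.exp (-ν ξ * (t - s)) *
            ∫ ξ' : EuclideanSpace ℝ (Fin 3),
              Real.exp (-C * ‖ξ'‖ ^ 2) *
                (χ (alphaTilde u (1/8) ν₀ (x - (ξ 0 + u) * (t - s)) ξ'))⁻¹) ≤
          C' * t / χ (alphaTilde u (1/8) ν₀ x ξ) := by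
  intro C hC
  obtain ⟨h0, hinv, hle1, hle2⟩ := chi_lower χ χ' hderiv hmono hid hone
  set A := 2 * (∫ ξ' : EuclideanSpace ℝ (Fin 3), Real.exp (-C * ‖ξ'‖ ^ 2)) with hA
  set B := (Real.sqrt (1/8 * ν₀))⁻¹ *
      ∫ ξ' : EuclideanSpace ℝ (Fin 3), Real.exp (-C * ‖ξ'‖ ^ 2) * gSing u (ξ' 0) with hB
  have hA0 : 0 ≤ A := mul_nonneg (by norm_num) (integral_nonneg fun _ => Real.exp_nonneg _)
  have hB0 : 0 ≤ B := mul_nonneg (by positivity)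
    (integral_nonneg fun _ => mul_nonneg (Real.exp_nonneg _) (gSing_nonneg _ _))
  set k := 1/8 * ν₀ with hk
  have hkpos : 0 < k := by positivity
  set D := Real.sqrt (2 * (1 + k)) with hD
  have hD0 : 0 ≤ D := Real.sqrt_nonneg _
  refine ⟨A + 4 * B * D + 1, by positivity, 1, le_rfl, ?_⟩
  intro t ht x hx ξ hxt
  have htpos : 0 < t := by linarith
  have hν : 0 ≤ ν ξ := le_trans (by positivity) (hνlb ξ)
  set a := ξ 0 + u with ha
  by_cases hdeg : x = 0 ∧ a = 0
  · obtain ⟨hx0, ha0⟩ := hdeg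
    have hz : ∀ s : ℝ, (∫ ξ' : EuclideanSpace ℝ (Fin 3), Real.exp (-C * ‖ξ'‖ ^ 2) *
        (χ (alphaTilde u (1/8) ν₀ (x - a * (t - s)) ξ'))⁻¹) = 0 := by
      intro s
      apply integral_undef
      have := not_integrable_sing u C hu hC χ hid
      simpa [hx0, ha0, alphaTilde, Real.sqrt_sq_eq_abs] using this
    simp only [hz, mul_zero, integral_zero]
    exact div_nonneg (by positivity) (h0 _ (Real.sqrt_nonneg _))
  · set M := max x |a| with hM
    have hMpos : 0 < M := by
      by_contra hcon
      push Not at hcon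
      apply hdeg
      have h1 := le_max_left x |a|
      have h2 := le_max_right x |a|
      refine ⟨by linarith, abs_nonpos_iff.1 (by linarith)⟩
    -- pointwise lower bound on the position
    have hpos : ∀ s, 0 < s → s < t → 0 < x - a * (t - s) ∧
        (Real.sqrt (x - a * (t - s)))⁻¹ ≤ (Real.sqrt M)⁻¹ * Real.sqrt t *
          (s ^ (-(1/2) : ℝ) + (t - s) ^ (-(1/2) : ℝ)) := by
      intro s hs hst
      have key : ∀ w, 0 < w → M * w / t ≤ x - a * (t - s) → 0 < x - a * (t - s) ∧
          (Real.sqrt (x - a * (t - s)))⁻¹ ≤ (Real.sqrt M)⁻¹ * Real.sqrt t * w ^ (-(1/2) : ℝ) := by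
        intro w hw hle
        have hp : 0 < M * w / t := by positivity
        refine ⟨hp.trans_le hle, ?_⟩
        refine (inv_anti₀ (Real.sqrt_pos.2 hp) (Real.sqrt_le_sqrt hle)).trans (le_of_eq ?_)
        rw [rpow_neg_half hw.le, Real.sqrt_div (by positivity), Real.sqrt_mul hMpos.le]
        have := Real.sqrt_pos.2 hMpos
        have := Real.sqrt_pos.2 htpos
        have := Real.sqrt_pos.2 hw
        field_simp
      have r1 : 0 ≤ s ^ (-(1/2) : ℝ) := Real.rpow_nonneg hs.le _
      have r2 : 0 ≤ (t - s) ^ (-(1/2) : ℝ) := Real.rpow_nonneg (by linarith) _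
      have r3 : 0 ≤ (Real.sqrt M)⁻¹ * Real.sqrt t := by positivity
      rcases le_or_gt a 0 with han | hap
      · obtain ⟨q1, q2⟩ := key (t - s) (by linarith) (by
          rw [div_le_iff₀ htpos]
          have e : |a| = -a := abs_of_nonpos han
          have hts : 0 < t - s := by linarith
          rcases max_cases x |a| with ⟨h1, h2⟩ | ⟨h1, h2⟩
          · rw [hM, h1]
            have : 0 ≤ -a * (t - s) * t := mul_nonneg (mul_nonneg (by linarith) hts.le) htpos.le
            nlinarith
          · rw [hM, h1, e]
            have : 0 ≤ -a * (t - s) * (t - 1) :=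
              mul_nonneg (mul_nonneg (by linarith) hts.le) (by linarith)
            nlinarith [mul_nonneg hx htpos.le])
        refine ⟨q1, q2.trans ?_⟩
        apply mul_le_mul_of_nonneg_left _ r3
        linarith
      · obtain ⟨q1, q2⟩ := key s hs (by
          rw [div_le_iff₀ htpos]
          have e : |a| = a := abs_of_pos hap
          have hMx : M = x := by
            rw [hM, e]; apply max_eq_left; nlinarith
          rw [hMx]
          nlinarith [mul_nonneg hxt (by linarith : (0:ℝ) ≤ t - s)])
        refine ⟨q1, q2.trans ?_⟩
        apply mul_le_mul_of_nonneg_left _ r3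
        linarith
    obtain ⟨ti, tv⟩ := time_integral A (B * ((Real.sqrt M)⁻¹ * Real.sqrt t)) t htpos.le
    have hLHS : (∫ s in Set.Icc (0:ℝ) t, Real.exp (-ν ξ * (t - s)) *
            ∫ ξ' : EuclideanSpace ℝ (Fin 3),
              Real.exp (-C * ‖ξ'‖ ^ 2) *
                (χ (alphaTilde u (1/8) ν₀ (x - a * (t - s)) ξ'))⁻¹) ≤
        A * t + B * ((Real.sqrt M)⁻¹ * Real.sqrt t) * (4 * Real.sqrt t) := by
      rw [← tv]
      have hinn : ∀ s, 0 ≤ ∫ ξ' : EuclideanSpace ℝ (Fin 3),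
              Real.exp (-C * ‖ξ'‖ ^ 2) *
                (χ (alphaTilde u (1/8) ν₀ (x - a * (t - s)) ξ'))⁻¹ := fun s =>
        integral_nonneg fun ξ' => mul_nonneg (Real.exp_nonneg _)
          (inv_nonneg.2 (h0 _ (Real.sqrt_nonneg _)))
      rw [integral_Icc_eq_integral_Ioo, integral_Icc_eq_integral_Ioo]
      apply integral_mono_of_nonneg
      · exact Filter.Eventually.of_forall fun s => mul_nonneg (Real.exp_nonneg _) (hinn s)
      · exact ti.mono_set Set.Ioo_subset_Icc_self
      · filter_upwards [ae_restrict_mem measurableSet_Ioo] with s hs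
        obtain ⟨q1, q2⟩ := hpos s hs.1 hs.2
        have hin := inner_bound u C ν₀ hC hν₀ χ h0 hinv _ q1
        have hexp : Real.exp (-ν ξ * (t - s)) ≤ 1 := by
          rw [Real.exp_le_one_iff]
          nlinarith [mul_nonneg hν (by linarith [hs.2] : (0:ℝ) ≤ t - s)]
        refine (mul_le_of_le_one_left (hinn s) hexp).trans (hin.trans ?_)
        rw [mul_assoc B]
        exact add_le_add le_rfl (mul_le_mul_of_nonneg_left q2 hB0)
    refine hLHS.trans ?_
    -- comparison with the weight
    set r := alphaTilde u (1/8) ν₀ x ξ with hr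
    have hrM : r ≤ (1 + k) * M := by
      rw [hr]
      unfold alphaTilde
      apply Real.sqrt_le_iff.2 ⟨by positivity, ?_⟩
      rw [← ha, ← sq_abs a, ← hk]
      have m1 : x ≤ M := le_max_left _ _
      have m2 : |a| ≤ M := le_max_right _ _
      have n1 : |a| ^ 2 ≤ M ^ 2 := pow_le_pow_left₀ (abs_nonneg a) m2 2
      have n2 : x ^ 2 ≤ M ^ 2 := pow_le_pow_left₀ hx m1 2
      have n3 : k ^ 2 * x ^ 2 ≤ k ^ 2 * M ^ 2 := mul_le_mul_of_nonneg_left n2 (sq_nonneg k)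
      nlinarith [mul_nonneg hkpos.le (sq_nonneg M)]
    have hrpos : 0 < r := by
      rw [hr]
      unfold alphaTilde
      apply Real.sqrt_pos.2
      rw [← ha, ← hk]
      by_cases hx0 : x = 0
      · have : a ≠ 0 := fun h => hdeg ⟨hx0, h⟩
        positivity
      · positivity
    have hχpos := (hinv r hrpos).1
    have c1 := hle1 r hrpos.le
    have c2 := hle2 r hrpos.le
    have hχM : χ r ≤ D * Real.sqrt M := by
      rw [hD, ← Real.sqrt_mul (by positivity)]
      apply Real.le_sqrt_of_sq_le
      nlinarith
    have hsM := Real.sqrt_pos.2 hMpos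
    have hχM' : (Real.sqrt M)⁻¹ * χ r ≤ D := by
      rw [inv_mul_le_iff₀ hsM]; linarith
    rw [le_div_iff₀ hχpos]
    have e : (A * t + B * ((Real.sqrt M)⁻¹ * Real.sqrt t) * (4 * Real.sqrt t)) * χ r =
        A * t * χ r + 4 * B * t * ((Real.sqrt M)⁻¹ * χ r) := by
      have := Real.mul_self_sqrt htpos.le
      linear_combination (4 * B * (Real.sqrt M)⁻¹ * χ r) * this
    rw [e]
    have f1 : A * t * χ r ≤ A * t * 1 := mul_le_mul_of_nonneg_left c1 (by positivity)
    have f2 := mul_le_mul_of_nonneg_left hχM' (by positivity : 0 ≤ 4 * B * t)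
    calc A * t * χ r + 4 * B * t * ((Real.sqrt M)⁻¹ * χ r)
        ≤ A * t * 1 + 4 * B * t * D := add_le_add f1 f2
      _ ≤ A * t * 1 + 4 * B * t * D + t := le_add_of_nonneg_right htpos.le
      _ = (A + 4 * B * D + 1) * t := by ring
end
end
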